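/- arXiv:1402.6261 — 2 statements merged into one kernel-verified Lean document; each statement's English description precedes it below -/
import Mathlib

section
/- For every matching τ of [2n], ℓ(g_τ) = 2(n(n−1)/2 − c(τ)). Moreover, for matchings τ and τ′ of [2n], g_τ ≤ g_{τ′} in the affine Bruhat order if and only if τ′ ≤ τ in the uncrossing order. -/
open Finset

noncomputable section
open scoped Classical

/-- The cyclic (clockwise) half-open interval `(a, b]` in `Fin m`. -/
def cIoc {m : ℕ} (a b : Fin m) : Finset (Fin m) :=
  univ.filter fun k => if a < b then a < k ∧ k ≤ b else a < k ∨ k ≤ b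

/-- The open cyclic (clockwise) arc from `a` to `b` in `Fin m`, excluding both endpoints. -/
def cIoo {m : ℕ} (a b : Fin m) : Finset (Fin m) :=
  univ.filter fun k => if a < b then a < k ∧ k < b else (a < k ∨ k < b) ∧ k ≠ a ∧ k ≠ b

/-- Set partitions of `[n] = Fin n`. -/
abbrev NCP (n : ℕ) := Finpartition (univ : Finset (Fin n))

/-- `a` and `b` lie in the same block of `σ`. -/
def sameBlock {n : ℕ} (σ : NCP n) (a b : Fin n) : Prop :=
  ∃ B ∈ σ.parts, a ∈ B ∧ b ∈ B

/-- `σ` is a noncrossing partition: there are no `a < b < c < d` with `a, c` in one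
block and `b, d` in a different block. -/
def IsNoncrossing {n : ℕ} (σ : NCP n) : Prop :=
  ∀ a b c d : Fin n, a < b → b < c → c < d →
    sameBlock σ a c → sameBlock σ b d → sameBlock σ a b

/-- The relation defining the dual (Kreweras complement) partition: `ĩ ~ j̃` iff no block
of `σ` meets both cyclic intervals `{(i+1), …, j}` and `{(j+1), …, i}`. -/
def dualRel {n : ℕ} (σ : NCP n) (i j : Fin n) : Prop :=
  i = j ∨ ¬ ∃ B ∈ σ.parts, (B ∩ cIoc i j).Nonempty ∧ (B ∩ cIoc j i).Nonempty

/-- The point `ī` of `[2n]` (0-based: `ī = 2i`). -/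
def bar {n : ℕ} (i : Fin n) : Fin (2*n) := ⟨2*(i:ℕ), by have := i.isLt; omega⟩

/-- The point `ĩ` of `[2n]` (0-based: `ĩ = 2i+1`). -/
def til {n : ℕ} (i : Fin n) : Fin (2*n) := ⟨2*(i:ℕ)+1, by have := i.isLt; omega⟩

/-- A matching (fixed-point-free involution) of `Fin m`. -/
def IsMatching {m : ℕ} (τ : Fin m → Fin m) : Prop :=
  Function.Involutive τ ∧ ∀ i, τ i ≠ i

/-- A noncrossing matching: there are no `a < b < c < d` with `τ a = c` and `τ b = d`. -/
def IsNCMatching {m : ℕ} (τ : Fin m → Fin m) : Prop :=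
  ¬ ∃ a b c d : Fin m, a < b ∧ b < c ∧ c < d ∧ τ a = c ∧ τ b = d

/-- `j` is the cyclic predecessor of `i` in the block of `σ` containing `i`
(`j = i` when `i` is a singleton). -/
def cyclicPred {n : ℕ} (σ : NCP n) (j i : Fin n) : Prop :=
  ∃ B ∈ σ.parts, i ∈ B ∧ j ∈ B ∧ ∀ x ∈ B, x ∉ cIoo j i

/-- `m` is the medial pairing of `σ`: it pairs `ī` (0-based `2i`) with `j̃` (0-based `2j+1`),
where `j` is the cyclic predecessor of `i` in its block. -/
def IsMedialOf {n : ℕ} (σ : NCP n) (m : Fin (2*n) → Fin (2*n)) : Prop :=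
  ∀ i j : Fin n, m (bar i) = til j ↔ cyclicPred σ j i

/-- The crossing number of a matching: the number of pairs `{a,b}` with
`a < b < τ a < τ b`. -/
def crossNum {m : ℕ} (τ : Fin m → Fin m) : ℕ :=
  ((univ : Finset (Fin m × Fin m)).filter fun p =>
    p.1 < p.2 ∧ p.2 < τ p.1 ∧ τ p.1 < τ p.2).card

/-- `a`, `b`, `c`, `d` are distinct and in cyclic order on `Fin m`. -/
def CyclicOrder4 {m : ℕ} (a b c d : Fin m) : Prop :=
  (a < b ∧ b < c ∧ c < d) ∨ (b < c ∧ c < d ∧ d < a) ∨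
  (c < d ∧ d < a ∧ a < b) ∨ (d < a ∧ a < b ∧ b < c)

/-- `τ` covers `τ'` in the uncrossing order. -/
def UncrossCover {m : ℕ} (τ' τ : Fin m → Fin m) : Prop :=
  IsMatching τ' ∧ IsMatching τ ∧
  ∃ a b c d : Fin m, CyclicOrder4 a b c d ∧ τ a = c ∧ τ b = d ∧
    (∀ x, x ≠ a → x ≠ b → x ≠ c → x ≠ d → τ' x = τ x) ∧
    ((τ' a = d ∧ τ' b = c ∧ ∀ x ∈ cIoo a b, τ x ∉ cIoo c d) ∨
     (τ' a = b ∧ τ' c = d ∧ ∀ x ∈ cIoo b c, τ x ∉ cIoo d a))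

/-- The uncrossing partial order on matchings: reflexive-transitive closure of covers. -/
def uncrossLE {m : ℕ} (τ' τ : Fin m → Fin m) : Prop :=
  Relation.ReflTransGen UncrossCover τ' τ

/-- An affine permutation of period `m`. -/
def IsAffinePerm (m : ℕ) (f : ℤ → ℤ) : Prop :=
  Function.Bijective f ∧ ∀ i : ℤ, f (i + m) = f i + m

/-- The length of an affine permutation of period `m`:
`#{(i,j) : 1 ≤ i ≤ m, i < j, f i > f j}`. -/
def affLen (m : ℕ) (f : ℤ → ℤ) : ℕ :=
  Set.ncard {p : ℤ × ℤ | 1 ≤ p.1 ∧ p.1 ≤ (m:ℤ) ∧ p.1 < p.2 ∧ f p.2 < f p.1}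

/-- The affine rank matrix `r_f(i,j) = #{a ≤ i : f a ≥ j}`. -/
def rankMat (f : ℤ → ℤ) (i j : ℤ) : ℕ :=
  Set.ncard {a : ℤ | a ≤ i ∧ j ≤ f a}

/-- Affine Bruhat order via rank matrices. -/
def bruhatLE (f g : ℤ → ℤ) : Prop := ∀ i j : ℤ, rankMat f i j ≤ rankMat g i j

/-- The sum `Σ_{i=1}^m (f i − i)`. -/
def windowSum (m : ℕ) (f : ℤ → ℤ) : ℤ :=
  ∑ i ∈ Finset.range m, (f ((i:ℤ)+1) - ((i:ℤ)+1))

/-- The affine permutation `g_τ` associated to a matching `τ` of `[2n]`: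
on `[2n]`, `g_τ i = τ i` if `τ i > i` and `g_τ i = τ i + 2n` if `τ i < i`,
extended periodically. -/
def gTau (n : ℕ) (τ : Fin (2*n) → Fin (2*n)) (i : ℤ) : ℤ :=
  if h : (i % ((2*n : ℕ) : ℤ)).toNat < 2*n then
    let r : Fin (2*n) := ⟨(i % ((2*n : ℕ) : ℤ)).toNat, h⟩
    (i - i % ((2*n : ℕ) : ℤ)) +
      (if r < τ r then ((τ r : ℕ) : ℤ) else ((τ r : ℕ) : ℤ) + 2*n)
  else i

/-- `f_τ = g_τ − 1`. -/
def fTau (n : ℕ) (τ : Fin (2*n) → Fin (2*n)) (i : ℤ) : ℤ := gTau n τ i - 1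

/-- An electrical affine permutation for `n`. -/
def IsElectrical (n : ℕ) (f : ℤ → ℤ) : Prop :=
  IsAffinePerm (2*n) f ∧
  (∀ i : ℤ, i ≤ f i ∧ f i ≤ i + 2*n - 2) ∧
  windowSum (2*n) f = ((n:ℤ) - 1) * (2*n) ∧
  ∀ i : ℤ, (f (f i + 1) - (i - 1)) % ((2*n : ℕ) : ℤ) = 0

/-- The Grassmann necklace subset `I_a(f) ⊆ [m]`: representatives in `[m]` (0-based) of
`{f b mod m : b < a and f b ≥ a}`. -/
def necklaceI (m : ℕ) (f : ℤ → ℤ) (a : ℤ) : Finset (Fin m) :=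
  univ.filter fun x => ∃ b : ℤ, b < a ∧ a ≤ f b ∧ f b % (m:ℤ) = ((x:ℕ):ℤ)

/-- The dual necklace subset `J_a(f) ⊆ [m]`: representatives in `[m]` (0-based) of
`{b mod m : b < a and f b ≥ a}`. -/
def necklaceJ (m : ℕ) (f : ℤ → ℤ) (a : ℤ) : Finset (Fin m) :=
  univ.filter fun x => ∃ b : ℤ, b < a ∧ a ≤ f b ∧ b % (m:ℤ) = ((x:ℕ):ℤ)

/-- Dominance order on `k`-element subsets of `Fin m`:
the `r`-th smallest element of `I` is at most the `r`-th smallest element of `J`. -/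
def domLE {m : ℕ} (k : ℕ) (I J : Finset (Fin m)) : Prop :=
  ∃ (hI : I.card = k) (hJ : J.card = k),
    ∀ r : Fin k, I.orderEmbOfFin hI r ≤ J.orderEmbOfFin hJ r

/-- `a`-shifted dominance order: rotate so that `a` becomes least, then compare. -/
def sdomLE {m : ℕ} (k : ℕ) (a : Fin m) (I J : Finset (Fin m)) : Prop :=
  domLE k (I.image (· - a)) (J.image (· - a))

/-- `a`-shifted lexicographic order on subsets of `Fin m`. -/
def lexLE {m : ℕ} (a : Fin m) (I J : Finset (Fin m)) : Prop :=
  I = J ∨ List.Lex (· < ·) ((I.image (· - a)).sort (· ≤ ·)) ((J.image (· - a)).sort (· ≤ ·))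

/-- A Catalan subset of `[2n]` (0-based): an `(n−1)`-subset such that the length-`2n`
word with `U` at positions `{0} ∪ {x+1 : x ∈ I}` and `D` elsewhere is a Dyck path. -/
def IsCatalan {n : ℕ} (I : Finset (Fin (2*n))) : Prop :=
  I.card = n - 1 ∧
  ∀ p : ℕ, p ≤ 2*n →
    p ≤ 2 * ((insert 0 (I.image fun x => (x:ℕ)+1)).filter (· < p)).card

/-- Catalan subset with respect to the shifted order `≤_a`. -/
def IsCatalanAt {n : ℕ} (a : Fin (2*n)) (I : Finset (Fin (2*n))) : Prop :=
  IsCatalan (I.image (· - a))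

/-- The set of maxima of `S` with respect to the `a`-shifted order. -/
def maxAt {m : ℕ} (a : Fin m) (S : Finset (Fin m)) : Finset (Fin m) :=
  S.filter fun x => ∀ y ∈ S, y - a ≤ x - a

/-- `I_a(σ)` for a noncrossing partition `σ`: the complement in `[2n]` of the set of
`≤_a`-maxima of the blocks of `σ` (embedded by `bar`) and of the blocks of the dual
partition `σ̃` (embedded by `til`). -/
def IaP {n : ℕ} (σ : NCP n) (a : Fin (2*n)) : Finset (Fin (2*n)) :=
  univ \ ((σ.parts.biUnion fun B => maxAt a (B.image bar)) ∪
          ((univ : Finset (Fin n)).biUnion fun i =>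
            maxAt a ((univ.filter (dualRel σ i)).image til)))

/-- `I` is concordant with `σ`: `I` has `n−1` elements and every block of `σ` and of
its dual `σ̃` contains exactly one element of `[2n] ∖ I`. -/
def Concordant {n : ℕ} (σ : NCP n) (I : Finset (Fin (2*n))) : Prop :=
  I.card = n - 1 ∧
  (∀ B ∈ σ.parts, ((B.image bar) ∩ (univ \ I)).card = 1) ∧
  (∀ i : Fin n, (((univ.filter (dualRel σ i)).image til) ∩ (univ \ I)).card = 1)

/-- `E(I)`: the set of noncrossing partitions concordant with `I`. -/
def ESet {n : ℕ} (I : Finset (Fin (2*n))) : Set (NCP n) :=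
  {σ | IsNoncrossing σ ∧ Concordant σ I}

/-- The maximal minor `Δ_I(X)` on the columns indexed by `I`, in increasing order. -/
def minorOn {k m : ℕ} (X : Matrix (Fin k) (Fin m) ℝ) (I : Finset (Fin m)) : ℝ :=
  if h : I.card = k then (X.submatrix id fun r => I.orderEmbOfFin h r).det else 0

/-- `X` is totally nonnegative: it has full rank `k` and all maximal minors are `≥ 0`. -/
def IsTNN {k m : ℕ} (X : Matrix (Fin k) (Fin m) ℝ) : Prop :=
  X.rank = k ∧ ∀ I : Finset (Fin m), I.card = k → 0 ≤ minorOn X I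

/-- `t` times the matrix unit `E_{p,q}` (0-based indices). -/
def matE (m : ℕ) (p q : ℕ) (t : ℝ) : Matrix (Fin m) (Fin m) ℝ :=
  Matrix.of fun r s => if (r:ℕ) = p ∧ (s:ℕ) = q then t else 0

/-- `x_i(t) = Id + t·E_{i,i+1}` (1-based index `i`). -/
def xB (m i : ℕ) (t : ℝ) : Matrix (Fin m) (Fin m) ℝ := 1 + matE m (i-1) i t

/-- `y_i(t) = Id + t·E_{i+1,i}` (1-based index `i`). -/
def yB (m i : ℕ) (t : ℝ) : Matrix (Fin m) (Fin m) ℝ := 1 + matE m i (i-1) t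

/-- `u_i(t) = x_i(t)·y_{i−1}(t)` (1-based index `i`). -/
def uB (m i : ℕ) (t : ℝ) : Matrix (Fin m) (Fin m) ℝ := xB m i t * yB m (i-1) t

/-- The columns of `X`, extended `n`-periodically to all integer indices (0-based). -/
def colP {k n : ℕ} (X : Matrix (Fin k) (Fin n) ℝ) (i : ℤ) : Fin k → ℝ :=
  fun r => if h : (i % (n:ℤ)).toNat < n then X r ⟨(i % (n:ℤ)).toNat, h⟩ else 0

/-- `f_X(i) = min { j ≥ i : v_i ∈ span(v_{i+1}, …, v_j) }` (0-based columns). -/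
def fX {k n : ℕ} (X : Matrix (Fin k) (Fin n) ℝ) (i : ℤ) : ℤ :=
  sInf {j : ℤ | i ≤ j ∧ colP X i ∈ Submodule.span ℝ (colP X '' Set.Ioc i j)}

/-- Fintype instance for finite partitions of a finite set. -/
instance {α : Type*} [DecidableEq α] [Fintype α] (s : Finset α) : Fintype (Finpartition s) :=
  Fintype.ofInjective Finpartition.parts fun _ _ h => Finpartition.ext h

/-- The sorted list of (the values of) a subset of `Fin m`. -/
def sortedL {m : ℕ} (I : Finset (Fin m)) : List ℕ :=
  (I.sort (· ≤ ·)).map Fin.val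

/-- The number of inversions of a list (= the number of adjacent transpositions
needed to sort it, when entries are distinct). -/
def invNum (l : List ℕ) : ℕ :=
  ((Finset.range l.length ×ˢ Finset.range l.length).filter fun pq =>
    pq.1 < pq.2 ∧ l.getD pq.2 0 < l.getD pq.1 0).card

/-- The subset of `Fin m` whose values lie in the list `l`. -/
def toFinF {m : ℕ} (l : List ℕ) : Finset (Fin m) :=
  univ.filter fun x => (x:ℕ) ∈ l

/-- The double sum `Σ_{σ ∈ E(l), κ ∈ E(l')} L σ · L κ`, where `E` of a list with a
repeated entry (or an out-of-range entry) is empty. -/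
def pairSum {n : ℕ} (L : NCP n → ℝ) (l l' : List ℕ) : ℝ :=
  if (l.Nodup ∧ ∀ x ∈ l, x < 2*n) ∧ (l'.Nodup ∧ ∀ x ∈ l', x < 2*n) then
    ∑ᶠ σ ∈ ESet (n := n) (toFinF l), ∑ᶠ κ ∈ ESet (n := n) (toFinF l'), L σ * L κ
  else 0

/-- The list obtained from `LI` by replacing its entries at the positions in `S`
(in increasing order of position) by the first `#S` entries of `LJ`. -/
def swapI (LI LJ : List ℕ) (S : Finset ℕ) : List ℕ :=
  (List.range LI.length).map fun p =>
    if p ∈ S then LJ.getD ((S.filter (· < p)).card) 0 else LI.getD p 0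

/-- The list obtained from `LJ` by replacing its first `#S` entries by the entries of
`LI` at the positions in `S`, in increasing order. -/
def swapJ (LI LJ : List ℕ) (S : Finset ℕ) : List ℕ :=
  (List.range LJ.length).map fun p =>
    if p < S.card then LI.getD ((S.sort (· ≤ ·)).getD p 0) 0 else LJ.getD p 0

/-!
Unrolling the circle `ℤ / 2n` to the line turns `g_τ` into the map sending each point to the far
end of its arc. Such arc maps `g` are characterized by `i < g i` and `g (g i) = i + 2n`.

Resolving a crossing of `τ` conjugates `g_τ` by an affine transposition, which raises the rank
matrix by one exactly on the translates of two disjoint rectangles. These are interchanged by the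
symmetry `(i, j) ↦ (j - 1, i + 2n + 1)`, under which the rank matrices of all arc maps change by
the same amount. Hence, if `g_τ < g_τ'`, it suffices to find a minimal crossing of `τ` for which
the two rank matrices differ throughout the first rectangle; an entry where they differ that is as
far as possible from the diagonal leads to one. Resolving it stays below `g_τ'`, and iterating
reaches `τ'` because there are finitely many matchings.

For the length, inversions of `g_τ` correspond to cyclically ordered quadruples `(x, y, τ y, τ x)`,
of which every nested and every aligned pair of arcs of `τ` contributes two. Each of the
`n (n - 1) / 2` pairs of arcs is crossing, nested or aligned.
-/

section Residue

/-- The point of the circle `Fin m` over which the integer `i` lies, for the covering of the circle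
by the line. -/
def residue (m : ℕ) [NeZero m] (i : ℤ) : Fin m :=
  ⟨(i % (m : ℤ)).toNat, by
    have := NeZero.pos m
    have := Int.emod_nonneg i (b := m) (by omega)
    have := Int.emod_lt_of_pos i (b := m) (by omega)
    omega⟩

variable {m : ℕ} [NeZero m]

theorem coe_residue (i : ℤ) : ((residue m i : ℕ) : ℤ) = i % m :=
  Int.toNat_of_nonneg (Int.emod_nonneg i (Int.natCast_ne_zero.2 (NeZero.ne m)))

theorem residue_eq_residue_iff {i j : ℤ} : residue m i = residue m j ↔ (m : ℤ) ∣ i - j := by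
  rw [Fin.ext_iff, ← Int.natCast_inj, coe_residue, coe_residue,
    Int.emod_eq_emod_iff_emod_sub_eq_zero, Int.dvd_iff_emod_eq_zero]

theorem residue_add_of_dvd {k : ℤ} (hk : (m : ℤ) ∣ k) (i : ℤ) :
    residue m (i + k) = residue m i :=
  residue_eq_residue_iff.2 (by rwa [add_sub_cancel_left])

theorem residue_natCast (x : Fin m) : residue m (x : ℕ) = x := by
  rw [Fin.ext_iff, ← Int.natCast_inj, coe_residue]
  exact Int.emod_eq_of_lt (by positivity) (by exact_mod_cast x.isLt)

theorem exists_residue_eq (a : ℤ) (x : Fin m) : ∃ y, a ≤ y ∧ y < a + m ∧ residue m y = x := by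
  have hm : (0 : ℤ) < m := by exact_mod_cast NeZero.pos m
  refine ⟨a + (x - a) % m, ?_, ?_, ?_⟩
  · linarith [Int.emod_nonneg (x - a : ℤ) hm.ne']
  · linarith [Int.emod_lt_of_pos (x - a : ℤ) hm]
  · conv_rhs => rw [← residue_natCast x]
    rw [residue_eq_residue_iff, Int.emod_def]
    exact ⟨-((x - a) / m), by ring⟩

theorem eq_of_residue_eq {i x y : ℤ} (hx : i < x) (hx' : x ≤ i + m) (hy : i < y)
    (hy' : y ≤ i + m) (h : residue m x = residue m y) : x = y :=
  sub_eq_zero.1 <| Int.eq_zero_of_abs_lt_dvd (residue_eq_residue_iff.1 h) (by rw [abs_lt]; omega)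

theorem sub_residue_eq_or {a y : ℤ} (hy : a ≤ y) (hy' : y < a + m) :
    y - (residue m y : ℕ) = a - (residue m a : ℕ) ∨
      y - (residue m y : ℕ) = a - (residue m a : ℕ) + m := by
  have hm : (0 : ℤ) < m := by exact_mod_cast NeZero.pos m
  have h₁ : a / m ≤ y / m := Int.ediv_le_ediv hm hy
  have h₂ : y / m ≤ (a + m) / m := Int.ediv_le_ediv hm hy'.le
  rw [Int.add_ediv_of_dvd_right dvd_rfl, Int.ediv_self hm.ne'] at h₂
  have hy := Int.mul_ediv_add_emod y m
  have ha := Int.mul_ediv_add_emod a m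
  rw [coe_residue, coe_residue]
  obtain h | h : y / m = a / m ∨ y / m = a / m + 1 := by omega
  · left
    rw [h] at hy
    linarith
  · right
    rw [h] at hy
    linarith

theorem cyclicOrder4_residue_iff {a b c d : ℤ} (hb : a ≤ b) (hb' : b < a + m) (hc : a ≤ c)
    (hc' : c < a + m) (hd : a ≤ d) (hd' : d < a + m) :
    CyclicOrder4 (residue m a) (residue m b) (residue m c) (residue m d) ↔
      a < b ∧ b < c ∧ c < d := by
  have := sub_residue_eq_or hb hb'
  have := sub_residue_eq_or hc hc'
  have := sub_residue_eq_or hd hd'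
  simp only [CyclicOrder4, Fin.lt_def]
  omega

theorem residue_mem_cIoo_iff {a b y : ℤ} (hab : a < b) (hb : b < a + m) (hy : a ≤ y)
    (hy' : y < a + m) : residue m y ∈ cIoo (residue m a) (residue m b) ↔ a < y ∧ y < b := by
  have := sub_residue_eq_or hab.le hb
  have := sub_residue_eq_or hy hy'
  simp only [cIoo, mem_filter_univ, Fin.lt_def, ne_eq, Fin.ext_iff]
  split_ifs <;> omega

end Residue

section Rank

/-- Every entry of the rank matrix of `f` counts a finite set. Since `Set.ncard` is `0` on infinite
sets, rank matrices are meaningful for such `f` only. -/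
def RankFinite (f : ℤ → ℤ) : Prop := ∀ i j : ℤ, {a : ℤ | a ≤ i ∧ j ≤ f a}.Finite

variable {f s : ℤ → ℤ} {i j p : ℤ}

theorem rankMat_eq_ncard_add_ite (hf : RankFinite f) (hp : p ≤ i) :
    rankMat f i j = {a | (a ≤ i ∧ j ≤ f a) ∧ a ≠ p}.ncard + if j ≤ f p then 1 else 0 := by
  split_ifs with hj
  · have hmem : p ∈ {a | a ≤ i ∧ j ≤ f a} := ⟨hp, hj⟩
    exact (Set.ncard_sdiff_singleton_add_one hmem (hf i j)).symm
  · rw [rankMat, add_zero]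
    congr with a
    refine (and_iff_left_of_imp ?_).symm
    rintro ha rfl
    exact hj ha.2

theorem rankMat_eq_rankMat_sub_one_add (hf : RankFinite f) (i j : ℤ) :
    rankMat f i j = rankMat f (i - 1) j + if j ≤ f i then 1 else 0 := by
  rw [rankMat_eq_ncard_add_ite hf le_rfl, rankMat]
  congr with a
  omega

theorem rankMat_apply_eq_rankMat_add_one_add (hf : RankFinite f) (hinj : f.Injective) (i p : ℤ) :
    rankMat f i (f p) = rankMat f i (f p + 1) + if p ≤ i then 1 else 0 := by
  have hne (a : ℤ) : f p + 1 ≤ f a ↔ f p ≤ f a ∧ a ≠ p := by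
    rw [Int.add_one_le_iff, lt_iff_le_and_ne, ne_comm (a := a), ne_eq, ne_eq, hinj.eq_iff]
  split_ifs with hp
  · rw [rankMat_eq_ncard_add_ite hf hp, if_pos le_rfl, rankMat]
    simp only [hne, and_assoc]
  · rw [rankMat, rankMat, add_zero]
    congr with a
    rw [hne]
    grind

theorem rankMat_injOn : Set.InjOn rankMat {f | RankFinite f} := fun f hf g hg h => by
  funext i
  have hff := rankMat_eq_rankMat_sub_one_add hf i (f i)
  have hgf := rankMat_eq_rankMat_sub_one_add hg i (f i)
  have hfg := rankMat_eq_rankMat_sub_one_add hf i (g i)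
  have hgg := rankMat_eq_rankMat_sub_one_add hg i (g i)
  rw [h] at hff hfg
  split_ifs at hff hgf hfg hgg <;> omega

theorem rankMat_comp_of_forall_le (hs : s.Involutive) (h : ∀ x ≤ i, s x ≤ i) :
    rankMat (f ∘ s) i j = rankMat f i j := by
  have : {a | a ≤ i ∧ j ≤ (f ∘ s) a} = s ⁻¹' {a | a ≤ i ∧ j ≤ f a} := by
    ext a
    exact and_congr_left' ⟨h a, fun ha => hs a ▸ h _ ha⟩
  rw [rankMat, this, ← Set.image_eq_preimage_of_inverse hs hs,
    Set.ncard_image_of_injective _ hs.injective, rankMat]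

theorem rankMat_comp_add_ite (hf : RankFinite f) (hfs : RankFinite (f ∘ s)) (hs : s.Involutive)
    (hp : p ≤ i) (hsp : i < s p) (h : ∀ x ≤ i, x ≠ p → s x ≤ i) :
    rankMat (f ∘ s) i j + (if j ≤ f p then 1 else 0) =
      rankMat f i j + if j ≤ f (s p) then 1 else 0 := by
  have hne {x : ℤ} (hx : x ≤ i) : s x ≠ p := fun h => by
    rw [← h, hs] at hsp
    omega
  have : {a | (a ≤ i ∧ j ≤ (f ∘ s) a) ∧ a ≠ p} =
      s ⁻¹' {a | (a ≤ i ∧ j ≤ f a) ∧ a ≠ p} := by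
    ext a
    have h₁ := h a
    have h₂ := h (s a)
    have h₃ := @hne a
    have h₄ := @hne (s a)
    rw [hs] at h₂ h₄
    simp only [Set.mem_ofPred_eq, Set.mem_preimage, Function.comp_apply]
    tauto
  rw [rankMat_eq_ncard_add_ite hf hp, rankMat_eq_ncard_add_ite hfs hp, this,
    ← Set.image_eq_preimage_of_inverse hs hs, Set.ncard_image_of_injective _ hs.injective]
  simp only [Function.comp_apply]
  ring

end Rank

section Quasiperiodic

/-- A self-map of the line commuting with the translation by `m`. The affine permutations of period
`m` are the bijective ones. -/
def IsQuasiperiodic (m : ℕ) (f : ℤ → ℤ) : Prop := ∀ i, f (i + m) = f i + m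

variable {m : ℕ} {f g : ℤ → ℤ} {k : ℤ}

namespace IsQuasiperiodic

theorem map_add_of_dvd (hf : IsQuasiperiodic m f) (hk : (m : ℤ) ∣ k) (i : ℤ) :
    f (i + k) = f i + k := by
  obtain ⟨c, rfl⟩ := hk
  rw [mul_comm, ← smul_eq_mul]
  exact AddConstMapClass.map_add_zsmul (AddConstMap.mk f hf) i c

theorem comp (hf : IsQuasiperiodic m f) (hg : IsQuasiperiodic m g) : IsQuasiperiodic m (f ∘ g) :=
  fun i => by rw [Function.comp_apply, hg, hf, Function.comp_apply]

theorem exists_le_add [NeZero m] (hf : IsQuasiperiodic m f) : ∃ M, ∀ a, f a ≤ a + M := by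
  obtain ⟨M, hM⟩ := (Set.finite_range fun x : Fin m => f (x : ℕ) - (x : ℕ)).bddAbove
  refine ⟨M, fun a => ?_⟩
  have hdvd := residue_eq_residue_iff.1 (residue_natCast (residue m a)).symm
  have hmap := hf.map_add_of_dvd hdvd (residue m a : ℕ)
  rw [add_sub_cancel] at hmap
  have := hM ⟨residue m a, rfl⟩
  dsimp only at this
  omega

theorem rankFinite [NeZero m] (hf : IsQuasiperiodic m f) : RankFinite f := fun i j => by
  obtain ⟨M, hM⟩ := hf.exists_le_add
  refine (Set.finite_Icc (j - M) i).subset fun a ⟨hi, hj⟩ => ⟨?_, hi⟩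
  linarith [hM a]

theorem rankMat_add_of_dvd (hf : IsQuasiperiodic m f) (hk : (m : ℤ) ∣ k) (i j : ℤ) :
    rankMat f (i + k) (j + k) = rankMat f i j := by
  have : {a | a ≤ i + k ∧ j + k ≤ f a} = (· + k) '' {a | a ≤ i ∧ j ≤ f a} := by
    ext a
    have := hf.map_add_of_dvd hk (a - k)
    rw [sub_add_cancel] at this
    simp only [Set.image_add_right, Set.mem_preimage, Set.mem_ofPred_eq, ← sub_eq_add_neg]
    omega
  rw [rankMat, this, Set.ncard_image_of_injective _ (add_left_injective k), rankMat]

theorem dvd_map_sub_map_iff (hf : IsQuasiperiodic m f) (hinj : f.Injective) {x y : ℤ} :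
    (m : ℤ) ∣ f x - f y ↔ (m : ℤ) ∣ x - y := by
  constructor <;> intro h
  · have : x = y + (f x - f y) := hinj <| by rw [hf.map_add_of_dvd h, add_sub_cancel]
    rwa [sub_eq_iff_eq_add'.2 this]
  · rw [← add_sub_cancel y x, hf.map_add_of_dvd h, add_sub_cancel_left]
    exact h

end IsQuasiperiodic

end Quasiperiodic

section AffineSwap

/-- The affine transposition of period `m` exchanging `a + k` and `b + k` for every multiple `k`
of `m`. It is meaningful only when `m` does not divide `b - a`. -/
def affineSwap (m : ℕ) (a b x : ℤ) : ℤ :=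
  if (m : ℤ) ∣ x - a then x + (b - a) else if (m : ℤ) ∣ x - b then x + (a - b) else x

/-- The translates of the rectangle `[a, b) × (c, d]` by the multiples of `(m, m)`. -/
def rectOrbit (m : ℕ) (a b c d : ℤ) : Set (ℤ × ℤ) :=
  {p | ∃ k, (m : ℤ) ∣ k ∧ p.1 - k ∈ Set.Ico a b ∧ p.2 - k ∈ Set.Ioc c d}

variable {m : ℕ} {f : ℤ → ℤ} {a b c d i j k x : ℤ}

theorem not_dvd_sub (hne : b ≠ a) (ha : a < b + m) (hb : b < a + m) : ¬ (m : ℤ) ∣ b - a :=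
  fun h => hne <| sub_eq_zero.1 <| Int.eq_zero_of_abs_lt_dvd h <| by
    rw [abs_lt]
    omega

theorem affineSwap_eq_self (ha : ¬ (m : ℤ) ∣ x - a) (hb : ¬ (m : ℤ) ∣ x - b) :
    affineSwap m a b x = x := by
  rw [affineSwap, if_neg ha, if_neg hb]

theorem affineSwap_add_left (hk : (m : ℤ) ∣ k) : affineSwap m a b (a + k) = b + k := by
  rw [affineSwap, if_pos (by rwa [add_sub_cancel_left])]
  ring

theorem affineSwap_add_right (hab : ¬ (m : ℤ) ∣ b - a) (hk : (m : ℤ) ∣ k) :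
    affineSwap m a b (b + k) = a + k := by
  rw [affineSwap, add_sub_right_comm, if_neg (by rwa [dvd_add_left hk]),
    if_pos (by rwa [add_sub_cancel_left])]
  ring

theorem involutive_affineSwap (hab : ¬ (m : ℤ) ∣ b - a) :
    (affineSwap m a b).Involutive := fun x => by
  by_cases ha : (m : ℤ) ∣ x - a
  · conv_lhs => rw [← add_sub_cancel a x, affineSwap_add_left ha, affineSwap_add_right hab ha]
    ring
  by_cases hb : (m : ℤ) ∣ x - b
  · conv_lhs => rw [← add_sub_cancel b x, affineSwap_add_right hab hb, affineSwap_add_left hb]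
    ring
  rw [affineSwap_eq_self ha hb, affineSwap_eq_self ha hb]

theorem isQuasiperiodic_affineSwap (m : ℕ) (a b : ℤ) : IsQuasiperiodic m (affineSwap m a b) :=
  fun x => by
    simp only [affineSwap, add_sub_right_comm _ (m : ℤ), dvd_add_self_right]
    split_ifs <;> ring

theorem IsQuasiperiodic.map_affineSwap (hf : IsQuasiperiodic m f) (hinj : f.Injective)
    (a b x : ℤ) : f (affineSwap m a b x) = affineSwap m (f a) (f b) (f x) := by
  simp only [affineSwap, hf.dvd_map_sub_map_iff hinj]
  split_ifs with ha hb
  · have h₁ := hf.map_add_of_dvd ha a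
    have h₂ := hf.map_add_of_dvd ha b
    rw [add_sub_cancel] at h₁
    rw [show x + (b - a) = b + (x - a) by ring]
    omega
  · have h₁ := hf.map_add_of_dvd hb b
    have h₂ := hf.map_add_of_dvd hb a
    rw [add_sub_cancel] at h₁
    rw [show x + (a - b) = a + (x - b) by ring]
    omega
  · rfl

theorem residue_affineSwap [NeZero m] (a b x : ℤ) : residue m (affineSwap m a b x) =
    Equiv.swap (residue m a) (residue m b) (residue m x) := by
  simp only [affineSwap, Equiv.swap_apply_def, residue_eq_residue_iff]
  split_ifs with ha hb
  · rw [residue_eq_residue_iff]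
    rwa [show x + (b - a) - b = x - a by ring]
  · rw [residue_eq_residue_iff]
    rwa [show x + (a - b) - a = x - b by ring]
  · rfl

theorem mem_rectOrbit_iff (hb : b ≤ a + m) (hk : (m : ℤ) ∣ k) (ha : a + k ≤ i) (hi : i < b + k) :
    (i, j) ∈ rectOrbit m a b c d ↔ c + k < j ∧ j ≤ d + k := by
  simp only [rectOrbit, Set.mem_Ico, Set.mem_Ioc, Set.mem_ofPred_eq]
  refine ⟨?_, fun h => ⟨k, hk, by omega⟩⟩
  rintro ⟨k', hk', h⟩
  obtain rfl : k = k' := sub_eq_zero.1 <| Int.eq_zero_of_abs_lt_dvd (dvd_sub hk hk') <| by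
    rw [abs_lt]
    omega
  omega

theorem IsQuasiperiodic.rankMat_comp_affineSwap [NeZero m] (hf : IsQuasiperiodic m f) (hab : a < b)
    (hb : b < a + m) (hfab : f a < f b) (i j : ℤ) :
    rankMat (f ∘ affineSwap m a b) i j =
      rankMat f i j + if (i, j) ∈ rectOrbit m a b (f a) (f b) then 1 else 0 := by
  have hs := involutive_affineSwap (not_dvd_sub hab.ne' (by omega) hb)
  have hfs := hf.comp (isQuasiperiodic_affineSwap m a b)
  by_cases h : ∃ k, (m : ℤ) ∣ k ∧ a + k ≤ i ∧ i < b + k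
  · obtain ⟨k, hk, ha, hi⟩ := h
    have hrank := rankMat_comp_add_ite (i := i) (j := j) (p := a + k) hf.rankFinite hfs.rankFinite
      hs ha (by rwa [affineSwap_add_left hk]) fun x hx hxa => by
        unfold affineSwap
        split_ifs with h₁ h₂
        · by_contra! h'
          have := Int.eq_zero_of_abs_lt_dvd (dvd_sub hk h₁) (by rw [abs_lt]; omega)
          omega
        · omega
        · exact hx
    rw [affineSwap_add_left hk, hf.map_add_of_dvd hk, hf.map_add_of_dvd hk] at hrank
    rw [mem_rectOrbit_iff hb.le hk ha hi]
    split_ifs at hrank ⊢ <;> omega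
  · have hmem : (i, j) ∉ rectOrbit m a b (f a) (f b) := fun ⟨k, hk, ⟨ha, hi⟩, _⟩ =>
      h ⟨k, hk, by dsimp only at ha; omega, by dsimp only at hi; omega⟩
    rw [if_neg hmem, add_zero]
    refine rankMat_comp_of_forall_le hs fun x hx => ?_
    unfold affineSwap
    split_ifs with h₁ h₂
    · by_contra! h'
      exact h ⟨x - a, h₁, by omega, by omega⟩
    · omega
    · exact hx

end AffineSwap

section ArcMap

/-- The affine permutations `g_τ` of matchings `τ` of `[m]`, characterized intrinsically: `g`
sends a point of the line to the other end of the arc starting there, which is repeated with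
period `m`. -/
def IsArcMap (m : ℕ) (g : ℤ → ℤ) : Prop := (∀ i, i < g i) ∧ ∀ i, g (g i) = i + m

variable {m : ℕ} {f g : ℤ → ℤ} {i j : ℤ}

namespace IsArcMap

theorem lt_add (hg : IsArcMap m g) (i : ℤ) : g i < i + m := hg.2 i ▸ hg.1 (g i)

theorem isQuasiperiodic (hg : IsArcMap m g) : IsQuasiperiodic m g := fun i => by
  rw [← hg.2 i, hg.2]

theorem injective (hg : IsArcMap m g) : g.Injective := fun x y h => by
  have := congrArg g h
  rw [hg.2, hg.2] at this
  exact add_right_cancel this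

theorem map_sub (hg : IsArcMap m g) (i : ℤ) : g (i - m) = g i - m := by
  rw [eq_sub_iff_add_eq, ← hg.isQuasiperiodic, sub_add_cancel]

theorem rankMat_eq_zero (hg : IsArcMap m g) (h : i + m ≤ j) : rankMat g i j = 0 := by
  have : {a : ℤ | a ≤ i ∧ j ≤ g a} = ∅ := Set.eq_empty_of_forall_notMem fun a ⟨hi, hj⟩ => by
    linarith [hg.lt_add a]
  rw [rankMat, this, Set.ncard_empty]

theorem two_mul_rankMat_sub_one_self (hg : IsArcMap m g) (j : ℤ) :
    2 * rankMat g (j - 1) j = m := by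
  have hrank : rankMat g (j - 1) j = #{a ∈ Ico (j - m) j | j ≤ g a} := by
    rw [rankMat, ← Set.ncard_coe_finset]
    congr 1
    ext a
    have := hg.lt_add a
    simp only [Set.mem_ofPred_eq, coe_filter, mem_Ico]
    omega
  have hcompl : #{a ∈ Ico (j - m) j | ¬ j ≤ g a} = #{a ∈ Ico (j - m) j | j ≤ g a} := by
    refine card_bij' (fun a _ => g a) (fun a _ => g a - m) ?_ ?_ ?_ ?_
    · intro a ha
      have := hg.1 a
      have := hg.2 a
      simp only [mem_filter, mem_Ico] at ha ⊢
      omega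
    · intro a ha
      have := hg.lt_add a
      have := hg.map_sub (g a)
      have := hg.2 a
      simp only [mem_filter, mem_Ico] at ha ⊢
      omega
    · intro a _
      rw [hg.2, add_sub_cancel_right]
    · intro a _
      rw [hg.map_sub, hg.2, add_sub_cancel_right]
  have htotal := card_filter_add_card_filter_not (s := Ico (j - m) j) (fun a => j ≤ g a)
  rw [Int.card_Ico, sub_sub_cancel, Int.toNat_natCast] at htotal
  omega

variable [NeZero m]

theorem two_mul_rankMat (hg : IsArcMap m g) (i j : ℤ) :
    (2 * rankMat g i j : ℤ) = 2 * rankMat g (j - 1) (i + m + 1) + m + 2 * (i - j + 1) := by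
  have hfin := hg.isQuasiperiodic.rankFinite
  have step (i : ℤ) : (rankMat g i j : ℤ) - rankMat g (j - 1) (i + m + 1) =
      rankMat g (i - 1) j - rankMat g (j - 1) (i - 1 + m + 1) + 1 := by
    have h₁ := rankMat_eq_rankMat_sub_one_add hfin i j
    have h₂ := rankMat_apply_eq_rankMat_add_one_add hfin hg.injective (j - 1) (g i)
    rw [hg.2] at h₂
    rw [show i - 1 + m + 1 = i + (m : ℤ) by ring]
    split_ifs at h₁ h₂ <;> omega
  induction i using Int.inductionOn' (b := j - 1) with
  | zero =>
    have h₁ := hg.two_mul_rankMat_sub_one_self j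
    have h₂ := hg.rankMat_eq_zero (i := j - 1) (j := j - 1 + m + 1) (by omega)
    omega
  | succ k _ ih =>
    have := step (k + 1)
    rw [add_sub_cancel_right] at this
    omega
  | pred k _ ih =>
    have := step k
    omega

theorem rankMat_lt_rankMat_symm (hf : IsArcMap m f) (hg : IsArcMap m g) :
    rankMat f (j - 1) (i + m + 1) < rankMat g (j - 1) (i + m + 1) ↔
      rankMat f i j < rankMat g i j := by
  have := hf.two_mul_rankMat i j
  have := hg.two_mul_rankMat i j
  omega

theorem bounds_of_rankMat_lt (hf : IsArcMap m f) (hg : IsArcMap m g)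
    (h : rankMat f i j < rankMat g i j) : i + 2 < j ∧ j < i + m := by
  have bound {i j : ℤ} (h : rankMat f i j < rankMat g i j) : j < i + m := by
    by_contra! hc
    rw [hg.rankMat_eq_zero hc] at h
    exact h.not_ge (Nat.zero_le _)
  have := bound h
  have := bound ((hf.rankMat_lt_rankMat_symm hg).2 h)
  omega

end IsArcMap

end ArcMap

section Descent

variable {m : ℕ} [NeZero m] {f h : ℤ → ℤ} {a i j : ℤ}

-- Among the entries where the rank matrices differ, one with `j - i` maximal gives `a` and `h a`.
theorem exists_lt_apply_of_bruhatLE (hf : IsQuasiperiodic m f) (hh : IsQuasiperiodic m h)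
    (hle : bruhatLE f h) (hne : f ≠ h) :
    ∃ a, f a < h a ∧ rankMat f (a - 1) (h a + 1) = rankMat h (a - 1) (h a + 1) := by
  obtain ⟨M, hM⟩ := hh.exists_le_add
  have hbdd : ∀ D, (∃ i, rankMat f i (i + D) < rankMat h i (i + D)) → D ≤ M := by
    rintro D ⟨i, hi⟩
    obtain ⟨a, ha, haD⟩ := Set.nonempty_of_ncard_ne_zero (hi.trans_le' (Nat.zero_le _)).ne'
    linarith [hM a]
  have hinh : ∃ D i, rankMat f i (i + D) < rankMat h i (i + D) := by
    by_contra! hc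
    refine hne (rankMat_injOn hf.rankFinite hh.rankFinite (funext₂ fun i j => ?_))
    have := hc (j - i) i
    rw [add_sub_cancel] at this
    exact (hle i j).antisymm this
  obtain ⟨D, ⟨a, ha⟩, hmax⟩ := Int.exists_greatest_of_bdd ⟨M, hbdd⟩ hinh
  have heq (i j : ℤ) (hij : D < j - i) : rankMat f i j = rankMat h i j := by
    by_contra hc
    refine hij.not_ge (hmax _ ⟨i, ?_⟩)
    rw [add_sub_cancel]
    exact (hle i j).lt_of_ne hc
  have e₁ := heq (a - 1) (a + D) (by omega)
  have e₂ := heq (a - 1) (a + D + 1) (by omega)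
  have e₃ := heq a (a + D + 1) (by omega)
  have s₁ := rankMat_eq_rankMat_sub_one_add hf.rankFinite a (a + D)
  have s₂ := rankMat_eq_rankMat_sub_one_add hh.rankFinite a (a + D)
  have s₃ := rankMat_eq_rankMat_sub_one_add hf.rankFinite a (a + D + 1)
  have s₄ := rankMat_eq_rankMat_sub_one_add hh.rankFinite a (a + D + 1)
  obtain ⟨hfa, hha⟩ : f a < a + D ∧ h a = a + D := by split_ifs at s₁ s₂ s₃ s₄ <;> omega
  exact ⟨a, hha ▸ hfa, hha ▸ e₂⟩

theorem rankMat_lt_of_forall_notMem_Ioc (hf : RankFinite f) (hh : RankFinite h)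
    (hle : bruhatLE f h) (heq : rankMat f (a - 1) (h a + 1) = rankMat h (a - 1) (h a + 1))
    (hai : a ≤ i) (hx : ∀ x, a < x → x ≤ i → f x ∉ Set.Ioc (f a) (h a))
    (hj : j ∈ Set.Ioc (f a) (h a)) : rankMat f i j < rankMat h i j := by
  suffices hgap : rankMat f i j + rankMat h i (h a + 1) + 1 ≤
      rankMat h i j + rankMat f i (h a + 1) by
    have := hle i (h a + 1)
    omega
  simp only [Set.mem_Ioc] at hx hj
  induction i, hai using Int.leInduction with
  | base =>
    have s₁ := rankMat_eq_rankMat_sub_one_add hf a j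
    have s₂ := rankMat_eq_rankMat_sub_one_add hh a j
    have s₃ := rankMat_eq_rankMat_sub_one_add hf a (h a + 1)
    have s₄ := rankMat_eq_rankMat_sub_one_add hh a (h a + 1)
    have := hle (a - 1) j
    split_ifs at s₁ s₂ s₃ s₄ <;> omega
  | succ i hai ih =>
    have ih := ih fun x hax hxi => hx x hax (by omega)
    have hi := hx (i + 1) (by omega) le_rfl
    have s₁ := rankMat_eq_rankMat_sub_one_add hf (i + 1) j
    have s₂ := rankMat_eq_rankMat_sub_one_add hh (i + 1) j
    have s₃ := rankMat_eq_rankMat_sub_one_add hf (i + 1) (h a + 1)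
    have s₄ := rankMat_eq_rankMat_sub_one_add hh (i + 1) (h a + 1)
    rw [add_sub_cancel_right] at s₁ s₂ s₃ s₄
    split_ifs at s₁ s₂ s₃ s₄ <;> omega

theorem IsArcMap.exists_rankMat_lt_on_rectangle (hf : IsArcMap m f) (hh : IsArcMap m h)
    (hle : bruhatLE f h) (hne : f ≠ h) :
    ∃ a b, a < b ∧ f a < f b ∧ (∀ x, a < x → x < b → f x ∉ Set.Ioc (f a) (f b)) ∧
      ∀ i j, i ∈ Set.Ico a b → j ∈ Set.Ioc (f a) (f b) → rankMat f i j < rankMat h i j := by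
  have hff := hf.isQuasiperiodic
  have hhf := hh.isQuasiperiodic
  obtain ⟨a, ha, heq⟩ := exists_lt_apply_of_bruhatLE hff hhf hle hne
  have hlt {i j : ℤ} := rankMat_lt_of_forall_notMem_Ioc (i := i) (j := j) hff.rankFinite
    hhf.rankFinite hle heq
  have hinh : ∃ b, a < b ∧ f b ∈ Set.Ioc (f a) (h a) := by
    by_contra! hc
    have := hf.bounds_of_rankMat_lt hh <|
      hlt (hh.1 a).le (fun x hax _ => hc x hax) (Set.right_mem_Ioc.2 ha)
    omega
  obtain ⟨b, ⟨hab, hfb⟩, hmin⟩ := Int.exists_least_of_bdd ⟨a, fun b hb => hb.1.le⟩ hinh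
  have hgap (x : ℤ) (hax : a < x) (hxb : x < b) : f x ∉ Set.Ioc (f a) (h a) := fun hx =>
    (hmin x ⟨hax, hx⟩).not_gt hxb
  exact ⟨a, b, hab, hfb.1,
    fun x hax hxb hx => hgap x hax hxb (Set.Ioc_subset_Ioc_right hfb.2 hx),
    fun i j hi hj => hlt hi.1 (fun x hax hxi => hgap x hax (hxi.trans_lt hi.2))
      (Set.Ioc_subset_Ioc_right hfb.2 hj)⟩

end Descent

section Uncrossing

/-- The arcs of `g` starting at `a` and `b` cross, as well as the arcs starting at `b` and
`a + m`, as chords of the circle `ℤ / m` do. -/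
def IsArcCrossing (m : ℕ) (g : ℤ → ℤ) (a b : ℤ) : Prop := a < b ∧ b < g a ∧ g a < g b ∧ g b < a + m

/-- The arc map obtained from `g` by exchanging the ends `g a` and `g b` of two crossing arcs.
Conjugation by an affine transposition changes these arcs and their reverses at the same time. -/
def uncrossing (m : ℕ) (g : ℤ → ℤ) (a b : ℤ) : ℤ → ℤ :=
  affineSwap m (g a) (g b) ∘ g ∘ affineSwap m (g a) (g b)

variable {m : ℕ} {g h : ℤ → ℤ} {a b c d i j : ℤ}

theorem IsArcMap.uncrossing_eq (hg : IsArcMap m g) (a b : ℤ) :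
    uncrossing m g a b = (g ∘ affineSwap m a b) ∘ affineSwap m (g a) (g b) := by
  funext x
  exact (hg.isQuasiperiodic.map_affineSwap hg.injective a b _).symm

theorem mem_rectOrbit_symm :
    (j - 1, i + m + 1) ∈ rectOrbit m a b c d ↔ (i, j) ∈ rectOrbit m c d (a + m) (b + m) := by
  simp only [rectOrbit, Set.mem_Ico, Set.mem_Ioc, Set.mem_ofPred_eq]
  constructor <;> rintro ⟨k, hk, h⟩
  · exact ⟨k - m, dvd_sub_self_right.2 hk, by omega⟩
  · exact ⟨k + m, dvd_add_self_right.2 hk, by omega⟩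

namespace IsArcCrossing

theorem notMem_rectOrbit (hc : IsArcCrossing m g a b) (h : (i, j) ∈ rectOrbit m a b (g a) (g b)) :
    (i, j) ∉ rectOrbit m (g a) (g b) (a + m) (b + m) := by
  have ⟨_, h₂, _, h₄⟩ := hc
  rintro ⟨l, hl, hi, -⟩
  obtain ⟨k, hk, hi', -⟩ := h
  simp only [Set.mem_Ico] at hi hi'
  have := Int.eq_zero_of_abs_lt_dvd (dvd_sub hk hl) (by rw [abs_lt]; omega)
  omega

theorem uncrossing_left (hg : IsArcMap m g) (hc : IsArcCrossing m g a b) :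
    uncrossing m g a b a = g b := by
  have ⟨h₁, h₂, h₃, h₄⟩ := hc
  have hfix : affineSwap m (g a) (g b) a = a := affineSwap_eq_self
    (not_dvd_sub (by omega) (by omega) (by omega)) (not_dvd_sub (by omega) (by omega) (by omega))
  rw [hg.uncrossing_eq, Function.comp_apply, Function.comp_apply, hfix]
  simpa only [add_zero] using congrArg g (affineSwap_add_left (m := m) (a := a) (b := b)
    (dvd_zero _))

theorem uncrossing_right (hg : IsArcMap m g) (hc : IsArcCrossing m g a b) :
    uncrossing m g a b b = g a := by
  have ⟨h₁, h₂, h₃, h₄⟩ := hc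
  have hfix : affineSwap m (g a) (g b) b = b := affineSwap_eq_self
    (not_dvd_sub (by omega) (by omega) (by omega)) (not_dvd_sub (by omega) (by omega) (by omega))
  rw [hg.uncrossing_eq, Function.comp_apply, Function.comp_apply, hfix]
  simpa only [add_zero] using congrArg g (affineSwap_add_right (m := m) (a := a) (b := b)
    (not_dvd_sub (by omega) (by omega) (by omega)) (dvd_zero _))

theorem isArcMap_uncrossing (hg : IsArcMap m g) (hc : IsArcCrossing m g a b) :
    IsArcMap m (uncrossing m g a b) := by
  have ⟨h₁, h₂, h₃, h₄⟩ := hc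
  have hs := involutive_affineSwap (not_dvd_sub (m := m) h₃.ne' (by omega) (by omega))
  have hsq := isQuasiperiodic_affineSwap m (g a) (g b)
  have huu (x : ℤ) : uncrossing m g a b (uncrossing m g a b x) = x + m := by
    simp only [uncrossing, Function.comp_apply, hs _, hg.2, hsq _]
  have huq : IsQuasiperiodic m (uncrossing m g a b) := hsq.comp (hg.isQuasiperiodic.comp hsq)
  have hlt {x y : ℤ} (hx : (m : ℤ) ∣ x - y) (hy : y < uncrossing m g a b y) :
      x < uncrossing m g a b x := by
    have := huq.map_add_of_dvd hx y
    rw [add_sub_cancel] at this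
    omega
  have hua := hc.uncrossing_left hg
  have hub := hc.uncrossing_right hg
  refine ⟨fun x => ?_, huu⟩
  by_cases hxa : (m : ℤ) ∣ x - a
  · exact hlt hxa (by omega)
  by_cases hxb : (m : ℤ) ∣ x - b
  · exact hlt hxb (by omega)
  by_cases hxc : (m : ℤ) ∣ x - g a
  · exact hlt hxc (by rw [← hub, huu]; omega)
  by_cases hxd : (m : ℤ) ∣ x - g b
  · exact hlt hxd (by rw [← hua, huu]; omega)
  rw [hg.uncrossing_eq, Function.comp_apply, affineSwap_eq_self hxc hxd, Function.comp_apply,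
    affineSwap_eq_self hxa hxb]
  exact hg.1 x

variable [NeZero m]

theorem rankMat_uncrossing (hg : IsArcMap m g) (hc : IsArcCrossing m g a b) (i j : ℤ) :
    rankMat (uncrossing m g a b) i j = rankMat g i j +
      (if (i, j) ∈ rectOrbit m a b (g a) (g b) then 1 else 0) +
      if (i, j) ∈ rectOrbit m (g a) (g b) (a + m) (b + m) then 1 else 0 := by
  have ⟨h₁, h₂, h₃, h₄⟩ := hc
  have ha : (g ∘ affineSwap m a b) (g a) = a + m := by
    rw [Function.comp_apply, affineSwap_eq_self, hg.2] <;> apply not_dvd_sub <;> omega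
  have hb : (g ∘ affineSwap m a b) (g b) = b + m := by
    rw [Function.comp_apply, affineSwap_eq_self, hg.2] <;> apply not_dvd_sub <;> omega
  have hq := hg.isQuasiperiodic
  rw [hg.uncrossing_eq, (hq.comp (isQuasiperiodic_affineSwap m a b)).rankMat_comp_affineSwap h₃
    (by omega) (by omega), ha, hb, hq.rankMat_comp_affineSwap h₁ (by omega) h₃]

theorem bruhatLE_uncrossing (hg : IsArcMap m g) (hc : IsArcCrossing m g a b) :
    bruhatLE g (uncrossing m g a b) := fun i j => by
  rw [hc.rankMat_uncrossing hg, add_assoc]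
  exact Nat.le_add_right _ _

theorem uncrossing_bruhatLE (hg : IsArcMap m g) (hh : IsArcMap m h) (hc : IsArcCrossing m g a b)
    (hle : bruhatLE g h)
    (hlt : ∀ i j, i ∈ Set.Ico a b → j ∈ Set.Ioc (g a) (g b) → rankMat g i j < rankMat h i j) :
    bruhatLE (uncrossing m g a b) h := by
  have hlt' {i j : ℤ} : (i, j) ∈ rectOrbit m a b (g a) (g b) → rankMat g i j < rankMat h i j := by
    rintro ⟨k, hk, hi, hj⟩
    have := hlt _ _ hi hj
    rwa [← hg.isQuasiperiodic.rankMat_add_of_dvd hk, ← hh.isQuasiperiodic.rankMat_add_of_dvd hk,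
      sub_add_cancel, sub_add_cancel] at this
  intro i j
  rw [hc.rankMat_uncrossing hg]
  split_ifs with h₁ h₂ h₂
  · exact absurd h₂ (hc.notMem_rectOrbit h₁)
  · exact hlt' h₁
  · exact (hg.rankMat_lt_rankMat_symm hh).1 (hlt' (mem_rectOrbit_symm.2 h₂))
  · exact hle i j

end IsArcCrossing

theorem IsArcMap.exists_uncrossing_bruhatLE [NeZero m] (hg : IsArcMap m g) (hh : IsArcMap m h)
    (hle : bruhatLE g h) (hne : g ≠ h) :
    ∃ a b, IsArcCrossing m g a b ∧ (∀ x, a < x → x < b → g x ∉ Set.Ioc (g a) (g b)) ∧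
      bruhatLE (uncrossing m g a b) h := by
  obtain ⟨a, b, hab, hgab, hgap, hlt⟩ := hg.exists_rankMat_lt_on_rectangle hh hle hne
  have hb := hg.bounds_of_rankMat_lt hh (hlt (b - 1) (g a + 1) (by simp [hab]) (by simp [hgab]))
  have ha := hg.bounds_of_rankMat_lt hh (hlt a (g b) (by simp [hab]) (by simp [hgab]))
  have hc : IsArcCrossing m g a b := ⟨hab, by omega, hgab, by omega⟩
  exact ⟨a, b, hc, hgap, hc.uncrossing_bruhatLE hg hh hle hlt⟩

end Uncrossing

section Covering

variable {m : ℕ} [NeZero m] {f g : ℤ → ℤ} {a b : ℤ}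

namespace IsArcMap

theorem ext_residue (hf : IsArcMap m f) (hg : IsArcMap m g)
    (h : ∀ i, residue m (f i) = residue m (g i)) : f = g :=
  funext fun i => eq_of_residue_eq (hf.1 i) (hf.lt_add i).le (hg.1 i) (hg.lt_add i).le (h i)

theorem cyclicOrder4_crossing_iff (hg : IsArcMap m g) (hab : a ≤ b) (hb : b < a + m) :
    CyclicOrder4 (residue m a) (residue m b) (residue m (g a)) (residue m (g b)) ↔
      IsArcCrossing m g a b := by
  have := hg.1 a
  have := hg.1 b
  have := hg.lt_add a
  have := hg.lt_add b
  unfold IsArcCrossing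
  obtain h | h := lt_or_ge (g b) (a + m)
  · rw [cyclicOrder4_residue_iff] <;> omega
  · rw [← residue_add_of_dvd (dvd_neg.2 dvd_rfl) (g b), cyclicOrder4_residue_iff] <;> omega

theorem cyclicOrder4_nesting_iff (hg : IsArcMap m g) (hab : a ≤ b) (hb : b < a + m) :
    CyclicOrder4 (residue m a) (residue m b) (residue m (g b)) (residue m (g a)) ↔
      a < b ∧ g b < g a := by
  have := hg.1 a
  have := hg.1 b
  have := hg.lt_add a
  have := hg.lt_add b
  obtain h | h := lt_or_ge (g b) (a + m)
  · rw [cyclicOrder4_residue_iff] <;> omega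
  · rw [← residue_add_of_dvd (dvd_neg.2 dvd_rfl) (g b), cyclicOrder4_residue_iff] <;> omega

theorem residue_map_notMem_cIoo (hg : IsArcMap m g) (hc : IsArcCrossing m g a b)
    (hgap : ∀ x, a < x → x < b → g x ∉ Set.Ioc (g a) (g b)) {x : ℤ} (hax : a < x) (hxb : x < b) :
    residue m (g x) ∉ cIoo (residue m (g a)) (residue m (g b)) := by
  have ⟨h₁, h₂, h₃, h₄⟩ := hc
  have := hg.1 x
  have := hg.lt_add x
  intro hmem
  obtain h | h := lt_or_ge (g x) (g a)
  · rw [← residue_add_of_dvd dvd_rfl (g x), residue_mem_cIoo_iff] at hmem <;> omega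
  · rw [residue_mem_cIoo_iff h₃ (by omega) h (by omega)] at hmem
    exact hgap x hax hxb ⟨hmem.1, hmem.2.le⟩

end IsArcMap

end Covering

section Matching

/-- The matching obtained from a matching `τ` by exchanging the partners of `a` and `b`. -/
def exchangePartners {m : ℕ} (τ : Fin m → Fin m) (a b : Fin m) : Fin m → Fin m :=
  Equiv.swap (τ a) (τ b) ∘ τ ∘ Equiv.swap (τ a) (τ b)

variable {m : ℕ} {τ τ' : Fin m → Fin m} {a b : Fin m}

theorem isMatching_exchangePartners (hτ : IsMatching τ) (a b : Fin m) :
    IsMatching (exchangePartners τ a b) := by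
  refine ⟨fun x => ?_, fun x hx => ?_⟩
  · simp only [exchangePartners, Function.comp_apply, Equiv.swap_apply_self, hτ.1 _]
  · refine hτ.2 (Equiv.swap (τ a) (τ b) x) ?_
    rw [← Equiv.swap_apply_self (τ a) (τ b) (τ _)]
    exact congrArg _ hx

theorem exchangePartners_left (hτ : IsMatching τ) (hab : τ a ≠ b) :
    exchangePartners τ a b a = τ b := by
  have hb : a ≠ τ b := fun h => hab (by rw [h, hτ.1])
  rw [exchangePartners, Function.comp_apply, Function.comp_apply,
    Equiv.swap_apply_of_ne_of_ne (hτ.2 a).symm hb, Equiv.swap_apply_left]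

theorem exchangePartners_right (hτ : IsMatching τ) (hab : τ a ≠ b) :
    exchangePartners τ a b b = τ a := by
  rw [exchangePartners, Function.comp_apply, Function.comp_apply,
    Equiv.swap_apply_of_ne_of_ne hab.symm (hτ.2 b).symm, Equiv.swap_apply_right]

theorem exchangePartners_of_ne (hτ : IsMatching τ) {x : Fin m} (ha : x ≠ a) (hb : x ≠ b)
    (hτa : x ≠ τ a) (hτb : x ≠ τ b) : exchangePartners τ a b x = τ x := by
  rw [exchangePartners, Function.comp_apply, Function.comp_apply,
    Equiv.swap_apply_of_ne_of_ne hτa hτb,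
    Equiv.swap_apply_of_ne_of_ne (hτ.1.injective.ne ha) (hτ.1.injective.ne hb)]

theorem eq_exchangePartners (hτ : IsMatching τ) (hτ' : IsMatching τ') (hab : τ a ≠ b)
    (ha : τ' a = τ b) (hb : τ' b = τ a)
    (h : ∀ x, x ≠ a → x ≠ b → x ≠ τ a → x ≠ τ b → τ' x = τ x) :
    τ' = exchangePartners τ a b := by
  have hσ := (isMatching_exchangePartners hτ a b).1
  have hσa := exchangePartners_left hτ hab
  have hσb := exchangePartners_right hτ hab
  funext x
  by_cases hxa : x = a
  · rw [hxa, ha, hσa]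
  by_cases hxb : x = b
  · rw [hxb, hb, hσb]
  by_cases hxτa : x = τ a
  · rw [hxτa, ← hb, hτ'.1, hb, ← hσb, hσ]
  by_cases hxτb : x = τ b
  · rw [hxτb, ← ha, hτ'.1, ha, ← hσa, hσ]
  rw [h x hxa hxb hxτa hxτb, exchangePartners_of_ne hτ hxa hxb hxτa hxτb]

theorem cyclicOrder4_rotate {a b c d : Fin m} : CyclicOrder4 a b c d ↔ CyclicOrder4 b c d a := by
  unfold CyclicOrder4
  tauto

theorem CyclicOrder4.ne_of_third {a b c d : Fin m} (h : CyclicOrder4 a b c d) : c ≠ b := by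
  unfold CyclicOrder4 at h
  omega

-- Resolving the crossing of the arcs `ac` and `bd` into `ab` and `cd` amounts to exchanging the
-- partners of `b` and `c`.
theorem uncrossCover_iff : UncrossCover τ' τ ↔ IsMatching τ ∧ ∃ a b,
    CyclicOrder4 a b (τ a) (τ b) ∧ (∀ x ∈ cIoo a b, τ x ∉ cIoo (τ a) (τ b)) ∧
      τ' = exchangePartners τ a b := by
  constructor
  · rintro ⟨hτ', hτ, a, b, c, d, ho, rfl, rfl, hne, ⟨ha, hb, hgap⟩ | ⟨ha, hc, hgap⟩⟩
    · exact ⟨hτ, a, b, ho, hgap, eq_exchangePartners hτ hτ' ho.ne_of_third ha hb hne⟩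
    · have hrot : CyclicOrder4 b (τ a) (τ b) (τ (τ a)) := by
        rw [hτ.1]
        exact cyclicOrder4_rotate.1 ho
      refine ⟨hτ, b, τ a, hrot, by rwa [hτ.1], eq_exchangePartners hτ hτ' hrot.ne_of_third ?_ hc ?_⟩
      · rw [hτ.1, ← ha, hτ'.1]
      · rw [hτ.1]
        exact fun x hb hc hd ha => hne x ha hb hc hd
  · rintro ⟨hτ, a, b, ho, hgap, rfl⟩
    exact ⟨isMatching_exchangePartners hτ a b, hτ, a, b, _, _, ho, rfl, rfl,
      fun _ => exchangePartners_of_ne hτ,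
      Or.inl ⟨exchangePartners_left hτ ho.ne_of_third, exchangePartners_right hτ ho.ne_of_third,
        hgap⟩⟩

end Matching

section GTau

variable {n : ℕ} [NeZero (2 * n)] {τ τ' : Fin (2 * n) → Fin (2 * n)}

theorem gTau_eq (τ : Fin (2 * n) → Fin (2 * n)) (i : ℤ) :
    gTau n τ i = i - (residue (2 * n) i : ℕ) +
      (if residue (2 * n) i < τ (residue (2 * n) i) then ((τ (residue (2 * n) i) : ℕ) : ℤ)
        else ((τ (residue (2 * n) i) : ℕ) : ℤ) + (2 * n : ℕ)) := by
  have h : (i % ((2 * n : ℕ) : ℤ)).toNat < 2 * n := (residue (2 * n) i).isLt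
  rw [gTau, dif_pos h, coe_residue]
  rfl

theorem residue_gTau (τ : Fin (2 * n) → Fin (2 * n)) (i : ℤ) :
    residue (2 * n) (gTau n τ i) = τ (residue (2 * n) i) := by
  have hdvd := residue_eq_residue_iff.1 (residue_natCast (residue (2 * n) i)).symm
  rw [gTau_eq, add_comm, residue_add_of_dvd hdvd]
  split_ifs
  · exact residue_natCast _
  · rw [residue_add_of_dvd dvd_rfl, residue_natCast]

theorem isArcMap_gTau (hτ : IsMatching τ) : IsArcMap (2 * n) (gTau n τ) := by
  have hbounds (i : ℤ) : i < gTau n τ i ∧ gTau n τ i < i + (2 * n : ℕ) := by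
    have hi := gTau_eq τ i
    have hne := hτ.2 (residue (2 * n) i)
    have := (residue (2 * n) i).isLt
    have := (τ (residue (2 * n) i)).isLt
    rw [Ne, Fin.ext_iff] at hne
    simp only [Fin.lt_def] at hi
    split_ifs at hi <;> omega
  refine ⟨fun i => (hbounds i).1, fun i => ?_⟩
  have hi := hbounds i
  have hgi := hbounds (gTau n τ i)
  refine eq_of_residue_eq (m := 2 * n) (i := gTau n τ i) hgi.1 hgi.2.le (by omega) (by omega) ?_
  rw [residue_gTau, residue_gTau, hτ.1, residue_add_of_dvd dvd_rfl]

theorem gTau_injective : Function.Injective (gTau n) := fun τ τ' h => by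
  funext x
  rw [← residue_natCast x, ← residue_gTau τ, ← residue_gTau τ', h]

theorem gTau_exchangePartners (hτ : IsMatching τ) {a b : ℤ}
    (hc : IsArcCrossing (2 * n) (gTau n τ) a b) :
    gTau n (exchangePartners τ (residue (2 * n) a) (residue (2 * n) b)) =
      uncrossing (2 * n) (gTau n τ) a b := by
  refine (isArcMap_gTau (isMatching_exchangePartners hτ _ _)).ext_residue
    (hc.isArcMap_uncrossing (isArcMap_gTau hτ)) fun i => ?_
  simp only [residue_gTau, uncrossing, exchangePartners, Function.comp_apply, residue_affineSwap]

theorem bruhatLE_of_uncrossCover (h : UncrossCover τ' τ) : bruhatLE (gTau n τ) (gTau n τ') := by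
  obtain ⟨hτ, x, y, ho, -, rfl⟩ := uncrossCover_iff.1 h
  obtain ⟨a, -, -, rfl⟩ := exists_residue_eq 0 x
  obtain ⟨b, hab, hb, rfl⟩ := exists_residue_eq a y
  have hg := isArcMap_gTau hτ
  rw [← residue_gTau τ, ← residue_gTau τ, hg.cyclicOrder4_crossing_iff hab hb] at ho
  rw [gTau_exchangePartners hτ ho]
  exact ho.bruhatLE_uncrossing hg

theorem bruhatLE_of_uncrossLE (h : uncrossLE τ' τ) : bruhatLE (gTau n τ) (gTau n τ') := by
  induction h with
  | refl => exact fun i j => le_rfl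
  | tail _ hcover ih => exact fun i j => (bruhatLE_of_uncrossCover hcover i j).trans (ih i j)

theorem uncrossCover_exchangePartners (hτ : IsMatching τ) {a b : ℤ}
    (hc : IsArcCrossing (2 * n) (gTau n τ) a b)
    (hgap : ∀ x, a < x → x < b → gTau n τ x ∉ Set.Ioc (gTau n τ a) (gTau n τ b)) :
    UncrossCover (exchangePartners τ (residue (2 * n) a) (residue (2 * n) b)) τ := by
  have hg := isArcMap_gTau hτ
  have hb : b < a + (2 * n : ℕ) := hc.2.1.trans (hg.lt_add a)
  refine uncrossCover_iff.2 ⟨hτ, _, _, ?_, fun x hx => ?_, rfl⟩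
  · rwa [← residue_gTau τ, ← residue_gTau τ, hg.cyclicOrder4_crossing_iff hc.1.le hb]
  · obtain ⟨y, hay, hya, rfl⟩ := exists_residue_eq a x
    rw [residue_mem_cIoo_iff hc.1 hb hay hya] at hx
    rw [← residue_gTau τ, ← residue_gTau τ, ← residue_gTau τ]
    exact hg.residue_map_notMem_cIoo hc hgap hx.1 hx.2

theorem exists_uncrossCover (hτ : IsMatching τ) (hτ' : IsMatching τ')
    (hle : bruhatLE (gTau n τ) (gTau n τ')) (hne : τ ≠ τ') :
    ∃ σ, UncrossCover σ τ ∧ rankMat (gTau n τ) < rankMat (gTau n σ) ∧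
      bruhatLE (gTau n σ) (gTau n τ') := by
  have hg := isArcMap_gTau hτ
  obtain ⟨a, b, hc, hgap, hle'⟩ :=
    hg.exists_uncrossing_bruhatLE (isArcMap_gTau hτ') hle (gTau_injective.ne hne)
  have hne' : gTau n τ ≠ uncrossing (2 * n) (gTau n τ) a b := fun h =>
    hc.2.2.1.ne ((congrFun h a).trans (hc.uncrossing_left hg))
  refine ⟨_, uncrossCover_exchangePartners hτ hc hgap, ?_, ?_⟩ <;>
    rw [gTau_exchangePartners hτ hc]
  · exact lt_of_le_of_ne (hc.bruhatLE_uncrossing hg) <|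
      rankMat_injOn.ne hg.isQuasiperiodic.rankFinite
        (hc.isArcMap_uncrossing hg).isQuasiperiodic.rankFinite hne'
  · exact hle'

theorem uncrossLE_of_bruhatLE (hτ : IsMatching τ) (hτ' : IsMatching τ')
    (hle : bruhatLE (gTau n τ) (gTau n τ')) : uncrossLE τ' τ := by
  have hwf : WellFounded (InvImage (· > ·) fun σ => rankMat (gTau n σ)) :=
    Finite.wellFounded_of_trans_of_irrefl _
  induction τ using hwf.induction with
  | _ τ ih =>
    by_cases hne : τ = τ'
    · exact hne ▸ Relation.ReflTransGen.refl
    obtain ⟨σ, hcover, hlt, hσ⟩ := exists_uncrossCover hτ hτ' hle hne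
    exact (ih σ hlt hcover.1 hσ).tail hcover

theorem bruhatLE_gTau_iff (hτ : IsMatching τ) (hτ' : IsMatching τ') :
    bruhatLE (gTau n τ) (gTau n τ') ↔ uncrossLE τ' τ :=
  ⟨uncrossLE_of_bruhatLE hτ hτ', bruhatLE_of_uncrossLE⟩

end GTau

section Length

/-- The nesting number of a matching: the number of pairs of arcs one of which encloses the
other. -/
def nestNum {m : ℕ} (τ : Fin m → Fin m) : ℕ :=
  #{p : Fin m × Fin m | p.1 < p.2 ∧ p.2 < τ p.2 ∧ τ p.2 < τ p.1}

/-- The alignment number of a matching: the number of pairs of arcs one of which lies entirely to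
the left of the other. -/
def alignNum {m : ℕ} (τ : Fin m → Fin m) : ℕ :=
  #{p : Fin m × Fin m | p.1 < τ p.1 ∧ τ p.1 < p.2 ∧ p.2 < τ p.2}

variable {m : ℕ} {τ : Fin m → Fin m}

theorem two_mul_card_filter_lt_map (hτ : IsMatching τ) : 2 * #{x | x < τ x} = m := by
  have hinv : #{x | ¬ x < τ x} = #{x | x < τ x} := by
    refine card_equiv hτ.1.toPerm fun x => ?_
    have := hτ.2 x
    simp only [mem_filter, mem_univ, true_and, Function.Involutive.coe_toPerm, hτ.1 x]
    omega
  have h := card_filter_add_card_filter_not (s := univ) fun x => x < τ x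
  rw [hinv, card_univ, Fintype.card_fin] at h
  omega

theorem crossNum_add_nestNum_add_alignNum (hτ : IsMatching τ) :
    crossNum τ + nestNum τ + alignNum τ = (#{x | x < τ x}).choose 2 := by
  rw [← card_product_filter_lt, ← filter_product, univ_product_univ, filter_filter, crossNum,
    nestNum, alignNum]
  simp only [card_filter, ← sum_add_distrib]
  refine sum_congr rfl fun ⟨x, y⟩ _ => ?_
  have hxy : τ x = τ y → x = y := fun h => hτ.1.injective h
  have hτx : τ x = y → τ y = x := fun h => by rw [← h, hτ.1]
  dsimp only
  split_ifs <;> omega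

theorem card_filter_cyclicOrder4_nesting (hτ : IsMatching τ) :
    #{p : Fin m × Fin m | CyclicOrder4 p.1 p.2 (τ p.2) (τ p.1)} =
      2 * (nestNum τ + alignNum τ) := by
  have hcases (x y : Fin m) : (if CyclicOrder4 x y (τ y) (τ x) then 1 else 0) =
      (if x < y ∧ y < τ y ∧ τ y < τ x then 1 else 0) +
        (if y < τ y ∧ τ y < τ x ∧ τ x < x then 1 else 0) +
        (if τ y < τ x ∧ τ x < x ∧ x < y then 1 else 0) +
        (if τ x < x ∧ x < y ∧ y < τ y then 1 else 0) := by
    unfold CyclicOrder4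
    split_ifs <;> omega
  let e : Fin m ≃ Fin m := hτ.1.toPerm
  have h₂ : #{p : Fin m × Fin m | p.2 < τ p.2 ∧ τ p.2 < τ p.1 ∧ τ p.1 < p.1} = alignNum τ :=
    card_equiv ((e.prodCongr (.refl _)).trans (.prodComm _ _)) fun p => by simp [e, hτ.1 _]
  have h₃ : #{p : Fin m × Fin m | τ p.2 < τ p.1 ∧ τ p.1 < p.1 ∧ p.1 < p.2} = nestNum τ :=
    card_equiv ((e.prodCongr e).trans (.prodComm _ _)) fun p => by simp [e, hτ.1 _]
  have h₄ : #{p : Fin m × Fin m | τ p.1 < p.1 ∧ p.1 < p.2 ∧ p.2 < τ p.2} = alignNum τ :=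
    card_equiv (e.prodCongr (.refl _)) fun p => by simp [e, hτ.1 _]
  simp only [card_filter, hcases, sum_add_distrib]
  simp only [← card_filter, h₂, h₃, h₄]
  rw [← nestNum]
  ring

end Length

section AffineLength

variable {n : ℕ} [NeZero (2 * n)] {τ : Fin (2 * n) → Fin (2 * n)}

theorem affLen_gTau (hτ : IsMatching τ) :
    affLen (2 * n) (gTau n τ) = 2 * (nestNum τ + alignNum τ) := by
  have hg := isArcMap_gTau hτ
  have hlt {i j : ℤ} (h : gTau n τ j < gTau n τ i) : j < i + (2 * n : ℕ) :=
    (hg.1 j).trans (h.trans (hg.lt_add i))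
  rw [← card_filter_cyclicOrder4_nesting hτ, affLen, ← Set.ncard_coe_finset]
  refine Set.BijOn.ncard_eq (f := fun p => (residue (2 * n) p.1, residue (2 * n) p.2))
    ⟨?_, ?_, ?_⟩
  · rintro ⟨i, j⟩ ⟨-, -, hij, hgji⟩
    simp only [coe_filter, mem_univ, true_and, Set.mem_ofPred_eq, ← residue_gTau]
    exact (hg.cyclicOrder4_nesting_iff hij.le (hlt hgji)).2 ⟨hij, hgji⟩
  · rintro ⟨i, j⟩ ⟨hi, hi', hij, hgji⟩ ⟨k, l⟩ ⟨hk, hk', hkl, hglk⟩ he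
    obtain ⟨hik, hjl⟩ := Prod.mk.inj he
    obtain rfl : i = k := eq_of_residue_eq (m := 2 * n) (i := 0) hi (by simpa using hi') hk
      (by simpa using hk') hik
    obtain rfl : j = l := eq_of_residue_eq hij (hlt hgji).le hkl (hlt hglk).le hjl
    rfl
  · rintro ⟨x, y⟩ hxy
    simp only [coe_filter, mem_univ, true_and, Set.mem_ofPred_eq] at hxy
    obtain ⟨i, hi, hi', rfl⟩ := exists_residue_eq 1 x
    obtain ⟨j, hij, hj, rfl⟩ := exists_residue_eq i y
    rw [← residue_gTau τ, ← residue_gTau τ, hg.cyclicOrder4_nesting_iff hij hj] at hxy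
    exact ⟨(i, j), ⟨hi, by omega, hxy⟩, rfl⟩

theorem affLen_gTau_add_crossNum (hτ : IsMatching τ) :
    affLen (2 * n) (gTau n τ) + 2 * crossNum τ = 2 * (n * (n - 1) / 2) := by
  have hn : #{x | x < τ x} = n := by
    have := two_mul_card_filter_lt_map hτ
    omega
  have hpairs := crossNum_add_nestNum_add_alignNum hτ
  rw [hn] at hpairs
  rw [affLen_gTau hτ, ← Nat.choose_two_right, ← hpairs]
  ring

end AffineLength

theorem stmt5 (n : ℕ) (hn : 0 < n) :
    (∀ τ : Fin (2*n) → Fin (2*n), IsMatching τ →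
      affLen (2*n) (gTau n τ) + 2 * crossNum τ = 2 * (n*(n-1)/2)) ∧
    (∀ τ τ' : Fin (2*n) → Fin (2*n), IsMatching τ → IsMatching τ' →
      (bruhatLE (gTau n τ) (gTau n τ') ↔ uncrossLE τ' τ)) := by
  have : NeZero (2 * n) := ⟨by omega⟩
  exact ⟨fun _ => affLen_gTau_add_crossNum, fun _ _ => bruhatLE_gTau_iff⟩

end
end

section
/- Let X be a totally nonnegative real k×n matrix (k ≥ 2) with 2 < f_X(1) =: j and f_X(1) < f_X(2) < n+2, and suppose the ≤_2-lexicographically minimal k-subset of [n] with nonvanishing maximal minor has the form {2} ∪ I ∪ {j}, where I ⊆ {3,…,n}∖{j} has k−2 elements. Then Δ_{{1}∪I∪{j}}(X) ≠ 0, and for every J ⊆ {3,…,n} with |J| = k−1 and Δ_{{1}∪J}(X) ≠ 0 one has Δ_{{1}∪I∪{j}}(X)·Δ_{{2}∪J}(X) ≥ Δ_{{1}∪J}(X)·Δ_{{2}∪I∪{j}}(X). -/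
open Finset

noncomputable section
open scoped Classical

/-
Lexicographic minimality says that `{2} ∪ A`, with `A = I ∪ {j}`, is the greedy basis when the
columns are scanned from the second one on. If `J ≠ A`, let `a` be the least element of `A ∖ J` and
exchange it for some `b ∈ J ∖ A` so that `Δ_{1J}` stays nonzero; greediness and the values of `f_X`
force `a < b`. The three-term Plücker relation on `1 < 2 < a < b` then shows that the exchange does
not increase the ratio `Δ_{2J} / Δ_{1J}`, and repeated exchanges lead from `J` to `A`. The same
relation on `1 < 2 < j < c`, for a column `c` outside the span of `A`, shows `Δ_{1A} ≠ 0`.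
-/

section Bracket

theorem update_vecCons_zero {α : Type*} {m : ℕ} (a : α) (u : Fin m → α) (b : α) :
    Function.update (Matrix.vecCons a u) 0 b = Matrix.vecCons b u :=
  Fin.update_cons_zero (α := fun _ => α) a u b

variable {R : Type*} [CommRing R] {m : ℕ}

/-- The bracket `[x y u₀ ⋯ uₘ₋₁]`: the determinant with rows `x`, `y` followed by the rows of `u`,
as a function of the two rows that vary in a three-term Plücker relation. -/
def bracket (u : Fin m → Fin (m + 2) → R) (x y : Fin (m + 2) → R) : R :=
  Matrix.detRowAlternating (Matrix.vecCons x (Matrix.vecCons y u))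

theorem bracket_row_right (u : Fin m → Fin (m + 2) → R) (x : Fin (m + 2) → R) (i : Fin m) :
    bracket u x (u i) = 0 :=
  Matrix.detRowAlternating.map_eq_zero_of_eq _ (i := 1) (j := i.succ.succ) (by simp)
    (Fin.succ_injective _ |>.ne (Fin.succ_ne_zero i).symm)

theorem exists_bracket_smul_eq (u : Fin m → Fin (m + 2) → R) (x y z : Fin (m + 2) → R) :
    ∃ c : Fin m → R,
      bracket u y z • x = bracket u x z • y + bracket u y x • z + ∑ i, c i • u i := by
  set A : Matrix (Fin (m + 2)) (Fin (m + 2)) R := Matrix.vecCons y (Matrix.vecCons z u)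
  have cramer : A.det • x = ∑ i, (A.updateRow i x).det • A i := by
    rw [← Matrix.det_transpose, ← Matrix.mulVec_cramer, Matrix.mulVec_transpose,
      Matrix.vecMul_eq_sum]
    simp only [Matrix.cramer_transpose_apply]
  have update_zero : A.updateRow 0 x = Matrix.vecCons x (Matrix.vecCons z u) :=
    update_vecCons_zero y (Matrix.vecCons z u) x
  have update_one : A.updateRow (Fin.succ 0) x = Matrix.vecCons y (Matrix.vecCons x u) :=
    (Fin.cons_update (α := fun _ => Fin (m + 2) → R) y (Matrix.vecCons z u) 0 x).symm.trans
      (congrArg (Matrix.vecCons y) (update_vecCons_zero z u x))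
  refine ⟨fun i => (A.updateRow i.succ.succ x).det, cramer.trans ?_⟩
  rw [Fin.sum_univ_succ, Fin.sum_univ_succ, update_zero, update_one, ← add_assoc]
  rfl

theorem bracket_pluecker (u : Fin m → Fin (m + 2) → R) (x y z w : Fin (m + 2) → R) :
    bracket u x z * bracket u y w =
      bracket u x y * bracket u z w + bracket u x w * bracket u y z := by
  obtain ⟨c, hc⟩ := exists_bracket_smul_eq u z y w
  let f : (Fin (m + 2) → R) →ₗ[R] R :=
    (Matrix.detRowAlternating.curryLeft x).toLinearMap (Matrix.vecCons 0 u) 0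
  have f_eq : ∀ t, f t = bracket u x t := fun t =>
    congrArg (Matrix.detRowAlternating.curryLeft x) (update_vecCons_zero 0 u t)
  have key := congrArg f hc
  simp only [map_add, map_sum, map_smul] at key
  simp only [f_eq, bracket_row_right, smul_eq_mul, mul_zero, Finset.sum_const_zero, add_zero] at key
  linear_combination key

end Bracket

section Greedy

theorem exists_notMem_span_image_sdiff_singleton {ι R M : Type*} [Semiring R] [AddCommMonoid M]
    [Module R M] {v : ι → M} {B C : Set ι} (hB : LinearIndepOn R v B) {u : M}
    (huB : u ∈ Submodule.span R (v '' B)) (huC : u ∉ Submodule.span R (v '' C)) :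
    ∃ b ∈ B, b ∉ C ∧ u ∉ Submodule.span R (v '' (B \ {b})) := by
  obtain ⟨l, hl, rfl⟩ := (Finsupp.mem_span_image_iff_linearCombination R).1 huB
  obtain ⟨b, hbl, hbC⟩ : ∃ b ∈ l.support, b ∉ C := by
    by_contra! hlC
    exact huC ((Finsupp.mem_span_image_iff_linearCombination R).2 ⟨l, hlC, rfl⟩)
  refine ⟨b, hl hbl, hbC, fun h => ?_⟩
  obtain ⟨l', hl', hll'⟩ := (Finsupp.mem_span_image_iff_linearCombination R).1 h
  have eq : l' = l := linearIndepOn_iffₛ.1 hB l'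
    (Finsupp.supported_mono Set.sdiff_subset hl') l hl hll'
  exact (hl' (eq ▸ hbl)).2 rfl

variable {K V α : Type*} [DivisionRing K] [AddCommGroup V] [Module K V] [LinearOrder α]
  {v : α → V} {a b c x y j : α} {A G J : Set α}

variable (K v a G) in
/-- The spanning property of a greedy choice `G` from the vectors `v c`, `a ≤ c`, scanned in
increasing order of `c`: each of them is spanned by the choices up to `c`. Linear independence of
`G` is required separately. -/
def IsGreedyFrom : Prop :=
  ∀ c, a ≤ c → v c ∈ Submodule.span K (v '' (G ∩ Set.Icc a c))

theorem IsGreedyFrom.span_image_Icc_le (hG : IsGreedyFrom K v a G) (c : α) :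
    Submodule.span K (v '' Set.Icc a c) ≤ Submodule.span K (v '' (G ∩ Set.Icc a c)) := by
  rw [Submodule.span_le]
  rintro _ ⟨i, ⟨hai, hic⟩, rfl⟩
  exact Submodule.span_mono (Set.image_mono
    (Set.inter_subset_inter_right _ (Set.Icc_subset_Icc_right hic))) (hG i hai)

theorem IsGreedyFrom.mem_span_image_insert (hG : IsGreedyFrom K v a (insert a A)) (hac : a ≤ c)
    (hc : v c ∉ Submodule.span K (v '' (A ∩ Set.Icc a c))) :
    v a ∈ Submodule.span K (v '' insert c (A ∩ Set.Icc a c)) := by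
  have hca := hG c hac
  rw [Set.insert_inter_of_mem (Set.left_mem_Icc.2 hac), Set.image_insert_eq] at hca
  rw [Set.image_insert_eq]
  exact mem_span_insert_exchange hca hc

theorem IsGreedyFrom.notMem_span_image_sdiff_singleton (hG : IsGreedyFrom K v a G)
    (hli : LinearIndepOn K v G) (hj : j ∈ G) {u : V}
    (hu : u ∈ Submodule.span K (v '' Set.Icc a j))
    (hu' : u ∉ Submodule.span K (v '' Set.Ico a j)) :
    u ∉ Submodule.span K (v '' (G \ {j})) := by
  intro huG
  have hle : Submodule.span K (insert u (v '' (G ∩ Set.Ico a j))) ≤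
      Submodule.span K (v '' (G \ {j})) := by
    have hsub : G ∩ Set.Ico a j ⊆ G \ {j} := fun i hi => ⟨hi.1, hi.2.2.ne⟩
    exact Submodule.span_le.2
      (Set.insert_subset huG ((Set.image_mono hsub).trans Submodule.subset_span))
  refine hli.notMem_span hj (hle (mem_span_insert_exchange ?_ fun h =>
    hu' (Submodule.span_mono (Set.image_mono Set.inter_subset_right) h)))
  rw [← Set.image_insert_eq]
  refine Submodule.span_mono (Set.image_mono fun i hi => ?_) (hG.span_image_Icc_le j hu)
  exact hi.2.2.eq_or_lt.imp id fun hij => ⟨hi.1, hi.2.1, hij⟩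

variable (K v x y j) in
/-- A bridge with pivot `j` at consecutive indices `x`, `y`, the condition under which a multiple of
`v x` can be split off `v y`. When `v` is read from its first index `x` on and extended with period
`n`, the affine permutation `f` of the configuration satisfies `f x = j` and `j < f y ≤ x + n`. -/
structure IsBridge : Prop where
  covBy : x ⋖ y
  left_mem_span : v x ∈ Submodule.span K (v '' Set.Ioc x j)
  left_notMem_span : v x ∉ Submodule.span K (v '' Set.Ioo x j)
  right_notMem_span : v y ∉ Submodule.span K (v '' Set.Ioc y j)
  right_mem_span : v y ∈ Submodule.span K (v '' insert x (Set.Ioi y))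

namespace IsBridge

theorem Ioc_eq_Icc (h : IsBridge K v x y j) : Set.Ioc x j = Set.Icc y j := by
  rw [← Set.Ioi_inter_Iic, h.covBy.Ioi_eq, Set.Ici_inter_Iic]

theorem Ioo_eq_Ico (h : IsBridge K v x y j) : Set.Ioo x j = Set.Ico y j := by
  rw [← Set.Ioi_inter_Iio, h.covBy.Ioi_eq, Set.Ici_inter_Iio]

theorem lt_of_notMem_span (h : IsBridge K v x y j) (hG : IsGreedyFrom K v y (insert y A))
    (hA : A ⊆ Set.Ioi y) (hyc : y < c) (hc : v c ∉ Submodule.span K (v '' (A ∩ Set.Icc y c))) :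
    j < c := by
  by_contra! hcj
  refine h.right_notMem_span (Submodule.span_mono (Set.image_mono ?_)
    (hG.mem_span_image_insert hyc.le hc))
  exact Set.insert_subset ⟨hyc, hcj⟩ fun i hi => ⟨hA hi.1, hi.2.2.trans hcj⟩

theorem exists_gt_notMem_span (h : IsBridge K v x y j) (hG : IsGreedyFrom K v y (insert y A))
    (hA : A ⊆ Set.Ioi y) (hxA : v x ∈ Submodule.span K (v '' A))
    (hyA : v y ∉ Submodule.span K (v '' A)) : ∃ c, j < c ∧ v c ∉ Submodule.span K (v '' A) := by
  obtain ⟨c, hyc, hcA⟩ : ∃ c, y < c ∧ v c ∉ Submodule.span K (v '' A) := by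
    by_contra! hspan
    refine hyA (Submodule.span_le.2 ?_ h.right_mem_span)
    rintro _ ⟨c, rfl | hyc, rfl⟩
    exacts [hxA, hspan c hyc]
  exact ⟨c, h.lt_of_notMem_span hG hA hyc fun hc =>
    hcA (Submodule.span_mono (Set.image_mono Set.inter_subset_left) hc), hcA⟩

theorem exists_mem_sdiff_lt (h : IsBridge K v x y j) (hG : IsGreedyFrom K v y (insert y A))
    (hA : A ⊆ Set.Ioi y) (hJ : J ⊆ Set.Ioi y) (hJli : LinearIndepOn K v J)
    (hxJ : v x ∉ Submodule.span K (v '' J)) (hb : b ∈ J \ A) : ∃ a ∈ A \ J, a < b := by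
  by_contra! hbA
  have hAJ : ∀ a ∈ A, a < b → a ∈ J := fun a ha hab => by
    by_contra haJ
    exact (hbA a ⟨ha, haJ⟩).not_gt hab
  have hsub : A ∩ Set.Icc y b ⊆ J \ {b} := fun a ha =>
    have hab : a ≠ b := ne_of_mem_of_not_mem ha.1 hb.2
    ⟨hAJ a ha.1 (ha.2.2.lt_of_ne hab), hab⟩
  have hb_notMem : v b ∉ Submodule.span K (v '' (A ∩ Set.Icc y b)) := fun hbs =>
    hJli.notMem_span hb.1 (Submodule.span_mono (Set.image_mono hsub) hbs)
  have hjb : j < b := h.lt_of_notMem_span hG hA (hJ hb.1) hb_notMem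
  have hyJ : v y ∈ Submodule.span K (v '' J) :=
    Submodule.span_mono (Set.image_mono (Set.insert_subset hb.1 (hsub.trans Set.sdiff_subset)))
      (hG.mem_span_image_insert (hJ hb.1).le hb_notMem)
  refine hxJ (Submodule.span_le.2 ?_ (hG.span_image_Icc_le j (h.Ioc_eq_Icc ▸ h.left_mem_span)))
  rintro _ ⟨i, ⟨rfl | hi, -, hij⟩, rfl⟩
  exacts [hyJ, Submodule.subset_span ⟨i, hAJ i hi (hij.trans_lt hjb), rfl⟩]

theorem notMem_span_sdiff_singleton (h : IsBridge K v x y j) (hG : IsGreedyFrom K v y G)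
    (hli : LinearIndepOn K v G) (hj : j ∈ G) : v x ∉ Submodule.span K (v '' (G \ {j})) :=
  hG.notMem_span_image_sdiff_singleton hli hj (h.Ioc_eq_Icc ▸ h.left_mem_span)
    (h.Ioo_eq_Ico ▸ h.left_notMem_span)

end IsBridge

end Greedy

section Minor

theorem exists_orderEmbOfFin_insert {α : Type*} [LinearOrder α] {m : ℕ} {S : Finset α}
    (hS : #S = m) {a : α} (haS : #(insert a S) = m + 1) :
    ∃ p : Fin (m + 1), (p : ℕ) = #{b ∈ S | b < a} ∧
      ((insert a S).orderEmbOfFin haS : Fin (m + 1) → α) =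
        p.insertNth (α := fun _ => α) a (S.orderEmbOfFin hS) := by
  set e := (insert a S).orderEmbOfFin haS with he
  have mem_or : ∀ i, e i = a ∨ e i ∈ S := fun i =>
    Finset.mem_insert.1 ((insert a S).orderEmbOfFin_mem haS i)
  obtain ⟨p, hp⟩ : a ∈ Set.range e := by
    rw [he, Finset.range_orderEmbOfFin]
    exact Finset.mem_insert_self a S
  refine ⟨p, ?_, Fin.eq_insertNth_iff.2 ⟨hp, ?_⟩⟩
  · have below : {b ∈ S | b < a} = (Finset.Iio p).map e.toEmbedding := by
      ext b
      simp only [Finset.mem_filter, Finset.mem_map, Finset.mem_Iio]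
      constructor
      · rintro ⟨hb, hba⟩
        obtain ⟨i, rfl⟩ : b ∈ Set.range e := by
          rw [he, Finset.range_orderEmbOfFin]
          exact Finset.mem_insert_of_mem hb
        exact ⟨i, e.lt_iff_lt.1 (hp ▸ hba), rfl⟩
      · rintro ⟨i, hi, rfl⟩
        have hia : e i < a := hp ▸ e.lt_iff_lt.2 hi
        exact ⟨(mem_or i).resolve_left hia.ne, hia⟩
    rw [below, Finset.card_map, Fin.card_Iio]
  · refine Finset.orderEmbOfFin_unique hS (fun i => ?_)
      (e.strictMono.comp (Fin.strictMono_succAbove p))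
    exact (mem_or _).resolve_left fun h => p.succAbove_ne i (e.injective (h.trans hp.symm))

variable {k n : ℕ} {X : Matrix (Fin k) (Fin n) ℝ}

theorem minorOn_of_card_ne {S : Finset (Fin n)} (hS : #S ≠ k) : minorOn X S = 0 :=
  dif_neg hS

theorem minorOn_of_card_eq {S : Finset (Fin n)} (hS : #S = k) :
    minorOn X S = Matrix.detRowAlternating (X.col ∘ S.orderEmbOfFin hS) := by
  rw [minorOn, dif_pos hS, ← Matrix.det_transpose]
  rfl

theorem comp_insertNth {α β : Type*} {m : ℕ} (f : α → β) (p : Fin (m + 1)) (a : α) (u : Fin m → α) :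
    f ∘ p.insertNth (α := fun _ => α) a u = p.insertNth (α := fun _ => β) (f a) (f ∘ u) :=
  Fin.eq_insertNth_iff.2 ⟨by simp, by ext; simp [Fin.removeNth]⟩

theorem minorOn_insert_insert {m : ℕ} {X : Matrix (Fin (m + 2)) (Fin n) ℝ} {L : Finset (Fin n)}
    (hL : #L = m) {x y : Fin n} (hxy : x < y) (hx : x ∉ L) (hy : y ∉ L) :
    minorOn X (insert x (insert y L)) =
      (-1) ^ #{l ∈ L | l < x} * (-1) ^ #{l ∈ L | l < y} *
        bracket (X.col ∘ L.orderEmbOfFin hL) (X.col x) (X.col y) := by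
  have hyL : #(insert y L) = m + 1 := by rw [Finset.card_insert_of_notMem hy, hL]
  have hxyL : #(insert x (insert y L)) = m + 2 := by
    rw [Finset.card_insert_of_notMem (by simp [hx, hxy.ne]), hyL]
  obtain ⟨q, hq, hqe⟩ := exists_orderEmbOfFin_insert hL hyL
  obtain ⟨p, hp, hpe⟩ := exists_orderEmbOfFin_insert hyL hxyL
  rw [Finset.filter_insert, if_neg hxy.not_gt] at hp
  have move_second : Matrix.detRowAlternating (Matrix.vecCons (X.col x)
      (q.insertNth (α := fun _ => Fin (m + 2) → ℝ) (X.col y) (X.col ∘ L.orderEmbOfFin hL))) =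
        (-1) ^ (q : ℕ) • bracket (X.col ∘ L.orderEmbOfFin hL) (X.col x) (X.col y) :=
    (Matrix.detRowAlternating.curryLeft (X.col x)).map_insertNth q _ _
  rw [minorOn_of_card_eq hxyL, hpe, hqe, comp_insertNth, comp_insertNth,
    AlternatingMap.map_insertNth, move_second, hp, hq, smul_smul, zsmul_eq_mul]
  push_cast
  rfl

theorem minorOn_pluecker {L : Finset (Fin n)} {x y z w : Fin n} (hxy : x < y) (hyz : y < z)
    (hzw : z < w) (hx : x ∉ L) (hy : y ∉ L) (hz : z ∉ L) (hw : w ∉ L) :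
    minorOn X (insert x (insert z L)) * minorOn X (insert y (insert w L)) =
      minorOn X (insert x (insert y L)) * minorOn X (insert z (insert w L)) +
      minorOn X (insert x (insert w L)) * minorOn X (insert y (insert z L)) := by
  by_cases hL : k = #L + 2
  · subst hL
    rw [minorOn_insert_insert rfl hxy hx hy, minorOn_insert_insert rfl hzw hz hw,
      minorOn_insert_insert rfl (hxy.trans hyz) hx hz,
      minorOn_insert_insert rfl (hyz.trans hzw) hy hw,
      minorOn_insert_insert rfl (hxy.trans (hyz.trans hzw)) hx hw,
      minorOn_insert_insert rfl hyz hy hz]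
    linear_combination ((-1) ^ #{l ∈ L | l < x} * (-1) ^ #{l ∈ L | l < y} *
      (-1) ^ #{l ∈ L | l < z} * (-1) ^ #{l ∈ L | l < w}) *
      bracket_pluecker (X.col ∘ L.orderEmbOfFin rfl) (X.col x) (X.col y) (X.col z) (X.col w)
  · have vanish : ∀ {a b : Fin n}, a < b → a ∉ L → b ∉ L → minorOn X (insert a (insert b L)) = 0 :=
      fun hab ha hb => minorOn_of_card_ne <| by
        rw [Finset.card_insert_of_notMem (by simp [ha, hab.ne]), Finset.card_insert_of_notMem hb]
        exact Ne.symm hL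
    rw [vanish (hxy.trans hyz) hx hz, vanish hxy hx hy, vanish hyz hy hz]
    ring

theorem minorOn_ne_zero_iff {S : Finset (Fin n)} :
    minorOn X S ≠ 0 ↔ #S = k ∧ LinearIndepOn ℝ X.col (S : Set (Fin n)) := by
  by_cases hS : #S = k
  · have cols : (X.submatrix id fun r => S.orderEmbOfFin hS r).col =
        (fun s : S => X.col s) ∘ S.orderIsoOfFin hS := rfl
    rw [minorOn, dif_pos hS, ← isUnit_iff_ne_zero, ← Matrix.isUnit_iff_isUnit_det,
      ← Matrix.linearIndependent_cols_iff_isUnit, cols, and_iff_right hS]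
    exact linearIndependent_equiv (S.orderIsoOfFin hS).toEquiv
  · simp [minorOn_of_card_ne hS, hS]

theorem minorOn_insert_ne_zero_iff {A : Finset (Fin n)} (hA : #A + 1 = k) {c : Fin n} :
    minorOn X (insert c A) ≠ 0 ↔
      LinearIndepOn ℝ X.col (A : Set (Fin n)) ∧
        X.col c ∉ Submodule.span ℝ (X.col '' (A : Set (Fin n))) := by
  by_cases hc : c ∈ A
  · have : X.col c ∈ Submodule.span ℝ (X.col '' (A : Set (Fin n))) :=
      Submodule.subset_span ⟨c, hc, rfl⟩
    have hAk : #A ≠ k := by omega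
    simp [Finset.insert_eq_of_mem hc, minorOn_of_card_ne hAk, this]
  · rw [minorOn_ne_zero_iff, Finset.card_insert_of_notMem hc, and_iff_right hA,
      Finset.coe_insert, linearIndepOn_insert (by simpa using hc)]

theorem mem_span_of_minorOn_ne_zero {S : Finset (Fin n)} (hS : minorOn X S ≠ 0) (u : Fin k → ℝ) :
    u ∈ Submodule.span ℝ (X.col '' (S : Set (Fin n))) := by
  obtain ⟨hcard, hli⟩ := minorOn_ne_zero_iff.1 hS
  have := hli.linearIndependent.span_eq_top_of_card_eq_finrank' (by simp [hcard])
  rw [Set.image_eq_range]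
  exact this ▸ Submodule.mem_top

theorem exists_minorOn_insert_erase_ne_zero {S : Finset (Fin n)} (hS : minorOn X S ≠ 0)
    {c : Fin n} {C : Set (Fin n)} (hc : X.col c ∉ Submodule.span ℝ (X.col '' C)) :
    ∃ b ∈ S, b ∉ C ∧ minorOn X (insert c (S.erase b)) ≠ 0 := by
  obtain ⟨hcard, hli⟩ := minorOn_ne_zero_iff.1 hS
  obtain ⟨b, hb, hbC, hcb⟩ := exists_notMem_span_image_sdiff_singleton hli
    (mem_span_of_minorOn_ne_zero hS _) hc
  refine ⟨b, hb, hbC, (minorOn_insert_ne_zero_iff ?_).2 ?_⟩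
  · rw [Finset.card_erase_add_one hb, hcard]
  · rw [Finset.coe_erase]
    exact ⟨hli.mono Set.sdiff_subset, hcb⟩

end Minor

section Lex

theorem sub_le_sub_right_iff_mem_Icc {n : ℕ} {a c g : Fin n} (hac : a ≤ c) :
    g - a ≤ c - a ↔ g ∈ Set.Icc a c := by
  have hc := Fin.sub_val_of_le hac
  rw [Set.mem_Icc, Fin.le_def (a := g - a)]
  rcases le_or_gt a g with hag | hga
  · have hg := Fin.sub_val_of_le hag
    omega
  · have hg := Fin.coe_sub_iff_lt.2 hga
    omega

theorem exists_mem_notMem_of_lex {α : Type*} [LinearOrder α] {l₁ l₂ : List α}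
    (h : List.Lex (· < ·) l₁ l₂) (hlen : l₁.length = l₂.length)
    (h₁ : l₁.Pairwise (· < ·)) (h₂ : l₂.Pairwise (· < ·)) :
    ∃ x ∈ l₁, x ∉ l₂ ∧ ∀ y ∈ l₂, y < x → y ∈ l₁ := by
  induction h with
  | nil => simp at hlen
  | cons _ ih =>
    rw [List.pairwise_cons] at h₁ h₂
    obtain ⟨x, hx, hx', hy⟩ := ih (by simpa using hlen) h₁.2 h₂.2
    refine ⟨x, List.mem_cons_of_mem _ hx, ?_, fun y hyl hyx => ?_⟩
    · rw [List.mem_cons, not_or]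
      exact ⟨(h₁.1 x hx).ne', hx'⟩
    · exact (List.mem_cons.1 hyl).elim (fun h => h ▸ List.mem_cons_self)
        fun hyl => List.mem_cons_of_mem _ (hy y hyl hyx)
  | @rel a _ b _ hab =>
    have hle : ∀ y ∈ b :: _, a < y :=
      List.forall_mem_cons.2 ⟨hab, fun y hy => hab.trans ((List.pairwise_cons.1 h₂).1 y hy)⟩
    exact ⟨a, List.mem_cons_self, fun ha => (hle a ha).false,
      fun y hy hya => ((hle y hy).not_gt hya).elim⟩

theorem lexLE.exists_mem {n : ℕ} {a : Fin n} {S T : Finset (Fin n)} (h : lexLE a S T)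
    (hne : S ≠ T) (hcard : #S = #T) : ∃ x ∈ S, x ∉ T ∧ ∀ y ∈ T, y - a < x - a → y ∈ S := by
  have : NeZero n := ⟨Nat.ne_zero_of_lt a.isLt⟩
  have hinj : Function.Injective (fun x : Fin n => x - a) := sub_left_injective
  obtain ⟨x, hx, hxT, hy⟩ := exists_mem_notMem_of_lex (h.resolve_left hne)
    (by simp [Finset.card_image_of_injective _ hinj, hcard])
    (Finset.sortedLT_sort _).pairwise (Finset.sortedLT_sort _).pairwise
  simp only [Finset.mem_sort] at hx hxT hy
  obtain ⟨x, hxS, rfl⟩ := Finset.mem_image.1 hx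
  exact ⟨x, hxS, fun hxT' => hxT (Finset.mem_image_of_mem _ hxT'), fun y hyT hyx =>
    (hinj.mem_finset_image).1 (hy _ (Finset.mem_image_of_mem _ hyT) hyx)⟩

theorem isGreedyFrom_of_lexLE {k n : ℕ} {X : Matrix (Fin k) (Fin n) ℝ} {a : Fin n}
    {G : Finset (Fin n)} (hG : minorOn X G ≠ 0)
    (hlex : ∀ K : Finset (Fin n), #K = k → minorOn X K ≠ 0 → lexLE a G K) :
    IsGreedyFrom ℝ X.col a (G : Set (Fin n)) := by
  intro c hac
  by_contra hc
  have hcG : c ∉ G := fun h => hc (Submodule.subset_span ⟨c, ⟨h, hac, le_rfl⟩, rfl⟩)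
  obtain ⟨g, hg, hgc, hK⟩ := exists_minorOn_insert_erase_ne_zero hG hc
  have hKcard : #(insert c (G.erase g)) = k := (minorOn_ne_zero_iff.1 hK).1
  obtain ⟨x, hx, hxK, hlt⟩ := (hlex _ hKcard hK).exists_mem
    (fun h => hcG (h ▸ Finset.mem_insert_self _ _)) ((minorOn_ne_zero_iff.1 hG).1.trans hKcard.symm)
  obtain rfl : x = g := by
    by_contra hxg
    exact hxK (Finset.mem_insert_of_mem (Finset.mem_erase.2 ⟨hxg, hx⟩))
  have hle : x - a ≤ c - a := not_lt.1 fun h => hcG (hlt c (Finset.mem_insert_self _ _) h)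
  exact hgc ⟨hg, (sub_le_sub_right_iff_mem_Icc hac).1 hle⟩

end Lex

section BridgeMinors

variable {k n : ℕ} {X : Matrix (Fin k) (Fin n) ℝ} {x y j a b : Fin n} {A J L : Finset (Fin n)}

theorem IsTNN.minorOn_nonneg (hX : IsTNN X) (S : Finset (Fin n)) : 0 ≤ minorOn X S := by
  by_cases hS : #S = k
  · exact hX.2 S hS
  · exact (minorOn_of_card_ne hS).ge

theorem IsBridge.minorOn_insert_erase_ne_zero (h : IsBridge ℝ X.col x y j) {G : Finset (Fin n)}
    (hG : IsGreedyFrom ℝ X.col y (G : Set (Fin n))) (hj : j ∈ G) (hG0 : minorOn X G ≠ 0) :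
    minorOn X (insert x (G.erase j)) ≠ 0 := by
  obtain ⟨hcard, hli⟩ := minorOn_ne_zero_iff.1 hG0
  rw [minorOn_insert_ne_zero_iff ((Finset.card_erase_add_one hj).trans hcard), Finset.coe_erase]
  exact ⟨hli.mono Set.sdiff_subset, h.notMem_span_sdiff_singleton hG hli hj⟩

theorem IsTNN.minorOn_insert_ne_zero (hX : IsTNN X) (h : IsBridge ℝ X.col x y j)
    (hG : IsGreedyFrom ℝ X.col y (insert y (A : Set (Fin n)))) (hA : (A : Set (Fin n)) ⊆ Set.Ioi y)
    (hj : j ∈ A) (hyA : minorOn X (insert y A) ≠ 0) : minorOn X (insert x A) ≠ 0 := by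
  have hxy : x < y := h.covBy.lt
  have hyj : y < j := hA hj
  have hy : y ∉ A := fun hy => lt_irrefl y (hA hy)
  have hx : x ∉ A := fun hx => hxy.not_gt (hA hx)
  have hcard : #A + 1 = k :=
    (Finset.card_insert_of_notMem hy).symm.trans (minorOn_ne_zero_iff.1 hyA).1
  obtain ⟨hAli, hyA_span⟩ := (minorOn_insert_ne_zero_iff hcard).1 hyA
  intro hxA
  have hxA_span : X.col x ∈ Submodule.span ℝ (X.col '' A) := by
    by_contra hx_span
    exact (minorOn_insert_ne_zero_iff hcard).2 ⟨hAli, hx_span⟩ hxA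
  obtain ⟨c, hjc, hcA_span⟩ := h.exists_gt_notMem_span hG hA hxA_span hyA_span
  have hc : c ∉ A := fun hc => hcA_span (Submodule.subset_span ⟨c, hc, rfl⟩)
  have hcA : 0 < minorOn X (insert c A) :=
    (hX.minorOn_nonneg _).lt_of_ne' ((minorOn_insert_ne_zero_iff hcard).2 ⟨hAli, hcA_span⟩)
  have hxyL : 0 < minorOn X (insert x (insert y (A.erase j))) := by
    rw [← Finset.erase_insert_of_ne hyj.ne]
    exact (hX.minorOn_nonneg _).lt_of_ne' (h.minorOn_insert_erase_ne_zero
      (by rwa [Finset.coe_insert]) (Finset.mem_insert_of_mem hj) hyA)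
  have pluecker := minorOn_pluecker (X := X) hxy hyj hjc (mt Finset.mem_of_mem_erase hx)
    (mt Finset.mem_of_mem_erase hy) (Finset.notMem_erase j A) (mt Finset.mem_of_mem_erase hc)
  rw [Finset.insert_comm j c, Finset.insert_erase hj, hxA, zero_mul] at pluecker
  have nonneg := mul_nonneg (hX.minorOn_nonneg (insert x (insert c (A.erase j))))
    (hX.minorOn_nonneg (insert y A))
  linarith [mul_pos hxyL hcA]

theorem IsBridge.exists_minorOn_exchange_ne_zero (h : IsBridge ℝ X.col x y j)
    (hG : IsGreedyFrom ℝ X.col y (insert y (A : Set (Fin n)))) (hA : (A : Set (Fin n)) ⊆ Set.Ioi y)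
    (hJ : (J : Set (Fin n)) ⊆ Set.Ioi y) (hxA : minorOn X (insert x A) ≠ 0)
    (hxJ : minorOn X (insert x J) ≠ 0) (hAJ : ¬ A ⊆ J) :
    ∃ a ∈ A \ J, ∃ b ∈ J \ A, a < b ∧ minorOn X (insert x (insert a (J.erase b))) ≠ 0 := by
  have hx : x ∉ J := fun hx => h.covBy.lt.not_gt (hJ hx)
  obtain ⟨a, ha, ha_min⟩ := (A \ J).exists_minimal (Finset.sdiff_nonempty.2 hAJ)
  obtain ⟨haA, haJ⟩ := Finset.mem_sdiff.1 ha
  have ha_span := (minorOn_ne_zero_iff.1 hxA).2.notMem_span (Finset.mem_insert_of_mem haA)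
  obtain ⟨b, hb, hb', hab⟩ := exists_minorOn_insert_erase_ne_zero hxJ ha_span
  have hxb : x ≠ b := by
    rintro rfl
    exact hb' ⟨Finset.mem_insert_self x A, (h.covBy.lt.trans (hA haA)).ne⟩
  have hbJ : b ∈ J := (Finset.mem_insert.1 hb).resolve_left hxb.symm
  have hbA : b ∉ A := fun hbA =>
    hb' ⟨Finset.mem_insert_of_mem hbA, ne_of_mem_of_not_mem hbJ haJ⟩
  rw [Finset.erase_insert_of_ne hxb, Finset.insert_comm] at hab
  have hcard : #J + 1 = k :=
    (Finset.card_insert_of_notMem hx).symm.trans (minorOn_ne_zero_iff.1 hxJ).1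
  obtain ⟨hJli, hxJ_span⟩ := (minorOn_insert_ne_zero_iff hcard).1 hxJ
  obtain ⟨a', ha', ha'b⟩ := h.exists_mem_sdiff_lt hG hA hJ hJli hxJ_span ⟨hbJ, hbA⟩
  have haa' : a ≤ a' := le_of_not_gt fun hlt =>
    hlt.not_ge (ha_min (Finset.mem_sdiff.2 ha') hlt.le)
  exact ⟨a, ha, b, Finset.mem_sdiff.2 ⟨hbJ, hbA⟩, haa'.trans_lt ha'b, hab⟩

theorem IsTNN.minorOn_div_le_div_of_lt (hX : IsTNN X) (hxy : x < y) (hya : y < a) (hab : a < b)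
    (hxL : x ∉ L) (hyL : y ∉ L) (haL : a ∉ L) (hbL : b ∉ L)
    (hxa : minorOn X (insert x (insert a L)) ≠ 0) (hxb : minorOn X (insert x (insert b L)) ≠ 0) :
    minorOn X (insert y (insert a L)) / minorOn X (insert x (insert a L)) ≤
      minorOn X (insert y (insert b L)) / minorOn X (insert x (insert b L)) := by
  rw [div_le_div_iff₀ ((hX.minorOn_nonneg _).lt_of_ne' hxa) ((hX.minorOn_nonneg _).lt_of_ne' hxb)]
  have pluecker := minorOn_pluecker (X := X) hxy hya hab hxL hyL haL hbL
  have nonneg := mul_nonneg (hX.minorOn_nonneg (insert x (insert y L)))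
    (hX.minorOn_nonneg (insert a (insert b L)))
  linarith

theorem IsTNN.minorOn_div_le_div (hX : IsTNN X) (h : IsBridge ℝ X.col x y j)
    (hG : IsGreedyFrom ℝ X.col y (insert y (A : Set (Fin n)))) (hA : (A : Set (Fin n)) ⊆ Set.Ioi y)
    (hJ : (J : Set (Fin n)) ⊆ Set.Ioi y) (hxA : minorOn X (insert x A) ≠ 0)
    (hxJ : minorOn X (insert x J) ≠ 0) :
    minorOn X (insert y A) / minorOn X (insert x A) ≤
      minorOn X (insert y J) / minorOn X (insert x J) := by
  have hxy : x < y := h.covBy.lt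
  have hx : ∀ {S : Finset (Fin n)}, (S : Set (Fin n)) ⊆ Set.Ioi y → x ∉ S :=
    fun hS hx => hxy.not_gt (hS hx)
  induction hd : #(A \ J) using Nat.strong_induction_on generalizing J with
  | _ d ih =>
  by_cases hAJ : A ⊆ J
  · have hcard : #A + 1 = #J + 1 := by
      rw [← Finset.card_insert_of_notMem (hx hA), ← Finset.card_insert_of_notMem (hx hJ),
        (minorOn_ne_zero_iff.1 hxA).1, (minorOn_ne_zero_iff.1 hxJ).1]
    rw [Finset.eq_of_subset_of_card_le hAJ (by omega)]
  obtain ⟨a, ha, b, hb, hab, hxa⟩ := h.exists_minorOn_exchange_ne_zero hG hA hJ hxA hxJ hAJ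
  obtain ⟨haA, haJ⟩ := Finset.mem_sdiff.1 ha
  obtain ⟨hbJ, hbA⟩ := Finset.mem_sdiff.1 hb
  have hJ' : ((insert a (J.erase b) : Finset (Fin n)) : Set (Fin n)) ⊆ Set.Ioi y := by
    rw [Finset.coe_insert, Finset.coe_erase]
    exact Set.insert_subset (hA haA) (Set.sdiff_subset.trans hJ)
  have hdecr : #(A \ insert a (J.erase b)) < d := by
    have hsdiff : A \ insert a (J.erase b) = (A \ J).erase a := by grind
    rw [hsdiff, ← hd]
    exact Finset.card_erase_lt_of_mem ha
  refine (ih _ hdecr hJ' hxa rfl).trans ?_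
  nth_rw 3 4 [← Finset.insert_erase hbJ]
  rw [← Finset.insert_erase hbJ] at hxJ
  exact hX.minorOn_div_le_div_of_lt hxy (hA haA) hab (mt Finset.mem_of_mem_erase (hx hJ))
    (fun hy => lt_irrefl y (hJ (Finset.mem_of_mem_erase hy))) (mt Finset.mem_of_mem_erase haJ)
    (Finset.notMem_erase b J) hxa hxJ

end BridgeMinors

section Period

variable {k n : ℕ} (X : Matrix (Fin k) (Fin n) ℝ)

theorem colP_natCast (x : Fin n) : colP X ((x : ℕ) : ℤ) = X.col x := by
  have h : (((x : ℕ) : ℤ) % (n : ℤ)).toNat = x := by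
    rw [← Int.natCast_mod, Nat.mod_eq_of_lt x.isLt, Int.toNat_natCast]
  funext r
  simp [colP, h, Matrix.col]

theorem colP_add_period (i : ℤ) : colP X (i + n) = colP X i := by
  funext r
  simp only [colP, Int.add_emod_right]

theorem image_colP_Ioc (a b : Fin n) :
    colP X '' Set.Ioc ((a : ℕ) : ℤ) ((b : ℕ) : ℤ) = X.col '' Set.Ioc a b := by
  rw [← Nat.image_cast_int_Ioc, ← Fin.image_val_Ioc, Set.image_image, Set.image_image]
  simp only [colP_natCast]

theorem image_colP_Ioo (a b : Fin n) :
    colP X '' Set.Ioo ((a : ℕ) : ℤ) ((b : ℕ) : ℤ) = X.col '' Set.Ioo a b := by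
  rw [← Nat.image_cast_int_Ioo, ← Fin.image_val_Ioo, Set.image_image, Set.image_image]
  simp only [colP_natCast]

theorem image_colP_Ioo_period (a : Fin n) :
    colP X '' Set.Ioo ((a : ℕ) : ℤ) (n : ℤ) = X.col '' Set.Ioi a := by
  rw [← Nat.image_cast_int_Ioo, ← Fin.image_val_Ioi, Set.image_image, Set.image_image]
  simp only [colP_natCast]

theorem colP_mem_span_fX (i : ℤ) :
    colP X i ∈ Submodule.span ℝ (colP X '' Set.Ioc i (fX X i)) := by
  refine (Int.csInf_mem (s := {j | i ≤ j ∧ colP X i ∈ Submodule.span ℝ (colP X '' Set.Ioc i j)})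
    ⟨i + n, by omega, ?_⟩ ⟨i, fun j hj => hj.1⟩).2
  rcases n.eq_zero_or_pos with rfl | hn
  · have : colP X i = 0 := by
      funext r
      simp [colP]
    exact this ▸ Submodule.zero_mem _
  · exact Submodule.subset_span ⟨i + n, ⟨by omega, le_rfl⟩, colP_add_period X i⟩

variable {X}

theorem notMem_span_of_lt_fX {i j : ℤ} (hij : i ≤ j) (hj : j < fX X i) :
    colP X i ∉ Submodule.span ℝ (colP X '' Set.Ioc i j) :=
  fun h => hj.not_ge (csInf_le ⟨i, fun _ h => h.1⟩ ⟨hij, h⟩)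

theorem isBridge_of_fX {x y j : Fin n} (hx : (x : ℕ) = 0) (hy : (y : ℕ) = 1)
    (hj : ((j : ℕ) : ℤ) = fX X 0) (hpos : 0 < fX X 0) (hlt : fX X 0 < fX X 1) (hle : fX X 1 ≤ n) :
    IsBridge ℝ X.col x y j := by
  have hx' : ((x : ℕ) : ℤ) = 0 := by omega
  have hy' : ((y : ℕ) : ℤ) = 1 := by omega
  refine ⟨?_, ?_, ?_, ?_, ?_⟩
  · exact Fin.covBy_iff.2 (Nat.covBy_iff_add_one_eq.2 (by omega))
  · rw [← image_colP_Ioc, ← colP_natCast, hx', hj]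
    exact colP_mem_span_fX X 0
  · rw [← image_colP_Ioo, ← colP_natCast, hx', hj, ← Set.Ioc_pred_right_eq_Ioo]
    exact notMem_span_of_lt_fX (Int.le_sub_one_of_lt hpos) (Int.pred_self_lt _)
  · rw [← image_colP_Ioc, ← colP_natCast, hy', hj]
    exact notMem_span_of_lt_fX (by omega) hlt
  · rw [Set.image_insert_eq, ← image_colP_Ioo_period, ← colP_natCast, ← colP_natCast, hx', hy',
      ← colP_add_period X 0, ← Set.image_insert_eq, zero_add, Set.Ioo_insert_right (by omega)]
    exact Submodule.span_mono (Set.image_mono (Set.Ioc_subset_Ioc_right hle)) (colP_mem_span_fX X 1)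

end Period

theorem stmt11 (k n : ℕ) (hk : 2 ≤ k) (X : Matrix (Fin k) (Fin n) ℝ)
    (hX : IsTNN X)
    (h1 : 1 < fX X 0) (h2 : fX X 0 < fX X 1) (h3 : fX X 1 < (n:ℤ) + 1)
    (zero one jf : Fin n) (hzero : (zero:ℕ) = 0) (hone : (one:ℕ) = 1)
    (hjf : ((jf:ℕ):ℤ) = fX X 0)
    (I : Finset (Fin n)) (hIcard : I.card = k - 2)
    (hIlo : ∀ x ∈ I, 2 ≤ (x:ℕ)) (hjfI : jf ∉ I)
    (hne : minorOn X (insert one (insert jf I)) ≠ 0)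
    (hlex : ∀ K : Finset (Fin n), K.card = k → minorOn X K ≠ 0 →
      lexLE one (insert one (insert jf I)) K) :
    minorOn X (insert zero (insert jf I)) ≠ 0 ∧
    ∀ J : Finset (Fin n), J.card = k - 1 → (∀ x ∈ J, 2 ≤ (x:ℕ)) →
      minorOn X (insert zero J) ≠ 0 →
      minorOn X (insert zero J) * minorOn X (insert one (insert jf I)) ≤
        minorOn X (insert zero (insert jf I)) * minorOn X (insert one J) := by
  set A := insert jf I
  have hlo : ∀ J : Finset (Fin n), (∀ x ∈ J, 2 ≤ (x : ℕ)) → (J : Set (Fin n)) ⊆ Set.Ioi one :=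
    fun J hJ x hx => Fin.lt_def.2 (hone ▸ hJ x hx)
  have hAlo : (A : Set (Fin n)) ⊆ Set.Ioi one :=
    hlo A ((Finset.forall_mem_insert _ _ _).2 ⟨by omega, hIlo⟩)
  have bridge : IsBridge ℝ X.col zero one jf :=
    isBridge_of_fX hzero hone hjf (by omega) h2 (by omega)
  have greedy : IsGreedyFrom ℝ X.col one (insert one (A : Set (Fin n))) := by
    rw [← Finset.coe_insert]
    exact isGreedyFrom_of_lexLE hne hlex
  have hzA : minorOn X (insert zero A) ≠ 0 :=
    hX.minorOn_insert_ne_zero bridge greedy hAlo (Finset.mem_insert_self jf I) hne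
  refine ⟨hzA, fun J _ hJ hzJ => ?_⟩
  have ratio_le := hX.minorOn_div_le_div bridge greedy hAlo (hlo J hJ) hzA hzJ
  rw [div_le_div_iff₀ ((hX.minorOn_nonneg _).lt_of_ne' hzA)
    ((hX.minorOn_nonneg _).lt_of_ne' hzJ)] at ratio_le
  linarith

end
end
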